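/- arXiv:2410.19618 — 6 statements merged into one kernel-verified Lean document; each statement's English description precedes it below -/
import Mathlib

section
/- Let C > 0 and let ρ : ℝ³ → ℝ be a smooth function such that |ρ(x)| ≤ C·exp(−‖x‖/C) for all x ∈ ℝ³. Then there exists K > 0 such that for all x ∈ ℝ³ with x ≠ 0, the radial component of the field integral satisfies |∫_{ℝ³} (((x − y) · (x/‖x‖)) / ‖x − y‖³) · ρ(y) dy| ≤ K/‖x‖². -/
/-!
Since `‖x‖² ≤ 2‖x - y‖² + 2‖y‖²` and the kernel is at most `‖x - y‖⁻²` in absolute value, `‖x‖²`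
times the integrand is bounded by `2 |ρ y| + 2 ‖y‖² |ρ y| ‖x - y‖⁻²`. In the last term, `‖x - y‖⁻²`
is at most `1` off the unit ball around `x`, while on that ball `‖y‖² |ρ y|` is bounded by a
constant. Hence the integrand times `‖x‖²` is dominated (`field_integrand_bound`) by a fixed
integrable function of `y` plus a translate of a fixed integrable function, namely the
inverse-square kernel truncated to the unit ball (`nearKernel`). By translation invariance of
Lebesgue measure the integral of this majorant does not depend on `x`; one more than it serves as `K`.
-/

open MeasureTheory
open scoped RealInnerProductSpace

/-- The inverse-square kernel `‖z‖⁻²` on `ℝ³`, truncated to the open unit ball. -/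
noncomputable def nearKernel (z : EuclideanSpace ℝ (Fin 3)) : ℝ :=
  (Metric.ball (0 : EuclideanSpace ℝ (Fin 3)) 1).indicator (fun z => (‖z‖ ^ 2)⁻¹) z

lemma nearKernel_nonneg (z : EuclideanSpace ℝ (Fin 3)) : 0 ≤ nearKernel z :=
  Set.indicator_nonneg (fun _ _ => by positivity) z

lemma integrable_nearKernel : Integrable nearKernel := by
  have h : IntegrableOn (fun z : EuclideanSpace ℝ (Fin 3) => (‖z‖ ^ 2)⁻¹) (Metric.ball 0 1) := by
    refine integrableOn_ball_of_norm_le_rpow (C := 1) (α := 2) (by simp)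
      (by rw [finrank_euclideanSpace_fin]; norm_num) (Filter.Eventually.of_forall fun z => ?_)
      (by fun_prop : Measurable _).aestronglyMeasurable
    rw [Real.norm_of_nonneg (by positivity), Real.rpow_neg (norm_nonneg z), one_mul,
      Real.rpow_two]
  exact h.integrable_indicator measurableSet_ball

lemma integrable_norm_pow_mul_exp (n : ℕ) {C : ℝ} (hC : 0 < C) :
    Integrable fun y : EuclideanSpace ℝ (Fin 3) => ‖y‖ ^ n * Real.exp (-‖y‖ / C) := by
  rw [integrable_fun_norm_addHaar volume (f := fun r : ℝ => r ^ n * Real.exp (-r / C))]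
  refine (integrableOn_rpow_mul_exp_neg_mul_rpow (p := 1) (s := ((2 + n : ℕ) : ℝ)) (b := C⁻¹)
    ((by norm_num : (-1 : ℝ) < 0).trans_le (Nat.cast_nonneg _)) one_pos
    (inv_pos.2 hC)).congr_fun (fun r _ => ?_) measurableSet_Ioi
  simp only [Real.rpow_natCast, Real.rpow_one, finrank_euclideanSpace_fin, smul_eq_mul]
  rw [show -C⁻¹ * r = -r / C by ring]
  ring

lemma sq_mul_exp_le {C : ℝ} (hC : 0 < C) {r : ℝ} (hr : 0 ≤ r) :
    r ^ 2 * Real.exp (-r / C) ≤ 2 * C ^ 2 := by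
  have h := Real.pow_div_factorial_le_exp (r / C) (by positivity) 2
  have h2 : r ^ 2 ≤ 2 * C ^ 2 * Real.exp (r / C) := by
    have : r ^ 2 = 2 * C ^ 2 * ((r / C) ^ 2 / (Nat.factorial 2 : ℕ)) := by
      simp only [Nat.factorial]; push_cast; field_simp
    rw [this]; gcongr
  rw [neg_div, Real.exp_neg, ← div_eq_mul_inv, div_le_iff₀ (Real.exp_pos _)]
  exact h2

/-- Pointwise majorant of the integrand. The coefficient `4 * C ^ 3` is `2 * C` times the bound
`2 * C ^ 2` for `‖y‖² exp (-‖y‖ / C)`. -/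
lemma field_integrand_bound {C : ℝ} (hC : 0 < C) {ρ : EuclideanSpace ℝ (Fin 3) → ℝ}
    (hbound : ∀ x : EuclideanSpace ℝ (Fin 3), |ρ x| ≤ C * Real.exp (-‖x‖ / C))
    {x : EuclideanSpace ℝ (Fin 3)} (hx : x ≠ 0) (y : EuclideanSpace ℝ (Fin 3)) :
    ‖x‖ ^ 2 * |⟪x - y, ‖x‖⁻¹ • x⟫ / ‖x - y‖ ^ 3 * ρ y| ≤
      2 * C * (‖y‖ ^ 0 * Real.exp (-‖y‖ / C)) + 2 * C * (‖y‖ ^ 2 * Real.exp (-‖y‖ / C))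
        + 4 * C ^ 3 * nearKernel (x - y) := by
  have hk := nearKernel_nonneg (x - y)
  -- At `y = x` the left-hand side vanishes, by the convention for division by zero.
  rcases eq_or_ne x y with rfl | hxy
  · simp only [sub_self, inner_zero_left, zero_div, zero_mul, abs_zero, mul_zero] at hk ⊢
    positivity
  have hd : 0 < ‖x - y‖ := norm_pos_iff.2 (sub_ne_zero.2 hxy)
  have hinner : |⟪x - y, ‖x‖⁻¹ • x⟫| ≤ ‖x - y‖ := by
    refine (abs_real_inner_le_norm _ _).trans ?_
    rw [norm_smul, norm_inv, norm_norm, inv_mul_cancel₀ (norm_ne_zero_iff.2 hx), mul_one]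
  have htri : ‖x‖ ≤ ‖x - y‖ + ‖y‖ := by simpa using norm_add_le (x - y) y
  have hsq : ‖x‖ ^ 2 ≤ 2 * ‖x - y‖ ^ 2 + 2 * ‖y‖ ^ 2 := by
    nlinarith [norm_nonneg x, norm_nonneg y, sq_nonneg (‖x - y‖ - ‖y‖)]
  have hE := Real.exp_pos (-‖y‖ / C)
  have hg := sq_mul_exp_le hC (norm_nonneg y)
  have hb := hbound y
  set d := ‖x - y‖ with hd_def
  set E := Real.exp (-‖y‖ / C)
  have hsplit : ‖y‖ ^ 2 * E * (d ^ 2)⁻¹ ≤ ‖y‖ ^ 2 * E + 2 * C ^ 2 * nearKernel (x - y) := by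
    by_cases h1 : d < 1
    · have : nearKernel (x - y) = (d ^ 2)⁻¹ :=
        Set.indicator_of_mem (by simpa [← hd_def] using h1) _
      rw [this]
      have : ‖y‖ ^ 2 * E * (d ^ 2)⁻¹ ≤ 2 * C ^ 2 * (d ^ 2)⁻¹ := by gcongr
      have : 0 ≤ ‖y‖ ^ 2 * E := by positivity
      linarith
    · have : (d ^ 2)⁻¹ ≤ 1 := inv_le_one_of_one_le₀ (one_le_pow₀ (not_lt.1 h1))
      have : ‖y‖ ^ 2 * E * (d ^ 2)⁻¹ ≤ ‖y‖ ^ 2 * E * 1 := by gcongr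
      have : 0 ≤ 2 * C ^ 2 * nearKernel (x - y) := by positivity
      linarith
  calc ‖x‖ ^ 2 * |⟪x - y, ‖x‖⁻¹ • x⟫ / d ^ 3 * ρ y|
      = ‖x‖ ^ 2 * (|⟪x - y, ‖x‖⁻¹ • x⟫| / d ^ 3 * |ρ y|) := by
        rw [abs_mul, abs_div, abs_of_pos (pow_pos hd 3)]
    _ ≤ (2 * d ^ 2 + 2 * ‖y‖ ^ 2) * (d / d ^ 3 * (C * E)) := by gcongr
    _ = 2 * C * E + 2 * C * (‖y‖ ^ 2 * E * (d ^ 2)⁻¹) := by field_simp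
    _ ≤ 2 * C * E + 2 * C * (‖y‖ ^ 2 * E + 2 * C ^ 2 * nearKernel (x - y)) := by gcongr
    _ = _ := by ring

/-- If `ρ : ℝ³ → ℝ` is smooth and exponentially localized, then the radial
component of the field integral decays at least like `1/‖x‖²`. -/
theorem field_radial_component_decay
    (C : ℝ) (hC : 0 < C) (ρ : EuclideanSpace ℝ (Fin 3) → ℝ)
    (hρ : ContDiff ℝ (⊤ : ℕ∞) ρ)
    (hbound : ∀ x : EuclideanSpace ℝ (Fin 3), |ρ x| ≤ C * Real.exp (-‖x‖ / C)) :
    ∃ K > 0, ∀ x : EuclideanSpace ℝ (Fin 3), x ≠ 0 →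
      |∫ y, (⟪x - y, ‖x‖⁻¹ • x⟫ / ‖x - y‖ ^ 3) * ρ y| ≤ K / ‖x‖ ^ 2 := by
  have hA := ((integrable_norm_pow_mul_exp 0 hC).const_mul (2 * C)).add
    ((integrable_norm_pow_mul_exp 2 hC).const_mul (2 * C))
  have hB := integrable_nearKernel.const_mul (4 * C ^ 3)
  set A : EuclideanSpace ℝ (Fin 3) → ℝ := (fun y => 2 * C * (‖y‖ ^ 0 * Real.exp (-‖y‖ / C)))
    + fun y => 2 * C * (‖y‖ ^ 2 * Real.exp (-‖y‖ / C)) with hA_def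
  set B : EuclideanSpace ℝ (Fin 3) → ℝ := fun z => 4 * C ^ 3 * nearKernel z with hB_def
  have hA0 : 0 ≤ ∫ y, A y := integral_nonneg fun y => by
    simp only [hA_def, Pi.add_apply, Pi.zero_apply]; positivity
  have hB0 : 0 ≤ ∫ y, B y := integral_nonneg fun y => by
    have := nearKernel_nonneg y
    simp only [hB_def, Pi.zero_apply]; positivity
  -- Adding `1` makes the constant strictly positive.
  refine ⟨(∫ y, A y) + (∫ y, B y) + 1, by positivity, fun x hx => ?_⟩
  have hx2 : 0 < ‖x‖ ^ 2 := pow_pos (norm_pos_iff.2 hx) 2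
  have hint : Integrable fun y => A y + B (x - y) := hA.add (hB.comp_sub_left x)
  have key := norm_integral_le_of_norm_le
    (f := fun y => ‖x‖ ^ 2 * (⟪x - y, ‖x‖⁻¹ • x⟫ / ‖x - y‖ ^ 3 * ρ y)) hint
    (Filter.Eventually.of_forall fun y => by
      rw [norm_mul, Real.norm_of_nonneg hx2.le, Real.norm_eq_abs]
      exact field_integrand_bound hC hbound hx y)
  rw [integral_const_mul, norm_mul, Real.norm_of_nonneg hx2.le, Real.norm_eq_abs,
    integral_add hA (hB.comp_sub_left x), integral_sub_left_eq_self B volume x] at key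
  rw [le_div_iff₀ hx2]
  linarith
end

section
/- For every x ∈ ℝ³ with x ≠ 0, writing r = ‖x‖, one has (1/(4π)) ∫_{ℝ³} exp(−‖y‖)/‖x − y‖ dy = 2/r − exp(−r)·(1 + 2/r). -/
open MeasureTheory

/-!
Every integrand is nonnegative, so the computation is carried out with lower Lebesgue integrals,
where Tonelli's theorem and changes of variables need no integrability; convergence comes out of
the finite value.

With `r = ‖x‖`, choose orthonormal coordinates `(z, p) ∈ ℝ × ℝ²` whose first axis points along `x`.
Then `‖y‖² = z² + |p|²` and `‖x - y‖² = (r - z)² + |p|²` (`lintegral_axial`). Polar coordinates in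
`p`, followed at fixed `z` by the substitution of `t = ‖y‖` for `|p| = √(t² - z²)`, turn `dp` into
`2π t dt` on `t > |z|` (`lintegral_sq_add_sq_shift`), while `‖x - y‖² = r² + t² - 2rz` is now affine
in `z`. After exchanging the integrals over the cone `|z| < t` (`lintegral_cone_swap`), the
`z`-integral is elementary,
`∫_{-t}^{t} dz / √(r² + t² - 2rz) = ((r + t) - |r - t|) / r = 2 min(t, r) / r`
(`lintegral_inv_dist`), which is Newton's theorem on the potential of a sphere. What remains is
`2π ∫₀^∞ t e^{-t} · 2 min(t, r) / r dt`, computed by splitting at `t = r` (`lintegral_radial`).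
-/

open Set Filter Topology
open scoped ENNReal

/-- The integral of a function of `‖y‖` and `‖x - y‖`, written in orthonormal coordinates `(z, p)`
whose first axis is spanned by `x`. -/
lemma lintegral_axial (x : EuclideanSpace ℝ (Fin 3)) (hx : x ≠ 0) (F : ℝ → ℝ → ℝ≥0∞)
    (hF : Measurable (Function.uncurry F)) :
    ∫⁻ y, F ‖y‖ ‖x - y‖ =
      ∫⁻ z : ℝ, ∫⁻ p : ℝ × ℝ,
        F (√(z ^ 2 + (p.1 ^ 2 + p.2 ^ 2))) (√((‖x‖ - z) ^ 2 + (p.1 ^ 2 + p.2 ^ 2))) := by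
  have hr : ‖x‖ ≠ 0 := norm_ne_zero_iff.2 hx
  obtain ⟨b, hb⟩ := Orthonormal.exists_orthonormalBasis_extension_of_card_eq (𝕜 := ℝ)
    (E := EuclideanSpace ℝ (Fin 3)) (ι := Fin 3) (by simp) (v := fun _ => ‖x‖⁻¹ • x) (s := {0}) (by
      refine ⟨fun i => ?_, fun i j hij => (hij (Subsingleton.elim i j)).elim⟩
      simp [norm_smul, hr])
  have hxb : b.repr x = ‖x‖ • EuclideanSpace.single 0 1 := by
    have h0 : x = ‖x‖ • b 0 := by rw [hb 0 rfl, smul_inv_smul₀ hr]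
    conv_lhs => rw [h0]
    rw [map_smul, b.repr_self]
  let e := (MeasurableEquiv.piFinSuccAbove (fun _ : Fin 3 => ℝ) 0)
  have he : MeasurePreserving e := volume_preserving_piFinSuccAbove (fun _ : Fin 3 => ℝ) 0
  let e₂ := (MeasurableEquiv.finTwoArrow (α := ℝ))
  have he₂ : MeasurePreserving e₂ := volume_preserving_finTwoArrow ℝ
  let G : EuclideanSpace ℝ (Fin 3) → ℝ≥0∞ := fun y => F ‖y‖ ‖b.repr x - y‖
  have hG : Measurable G :=
    hF.comp (f := fun y : EuclideanSpace ℝ (Fin 3) => (‖y‖, ‖b.repr x - y‖)) (by fun_prop)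
  have h1 : ∫⁻ y, F ‖y‖ ‖x - y‖ = ∫⁻ y, G y := by
    rw [← b.measurePreserving_repr.lintegral_comp hG]
    refine lintegral_congr fun y => ?_
    simp only [G, ← map_sub, LinearIsometryEquiv.norm_map]
  have hG2 : Measurable fun q : ℝ × (Fin 2 → ℝ) => G (WithLp.toLp 2 (e.symm q)) := by fun_prop
  rw [h1, ← (PiLp.volume_preserving_toLp (Fin 3)).lintegral_comp hG,
    ← he.symm.lintegral_comp (by fun_prop), Measure.volume_eq_prod, lintegral_prod _ hG2.aemeasurable]
  refine lintegral_congr fun z => ?_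
  rw [← he₂.symm.lintegral_comp (f := fun y => G (WithLp.toLp 2 (e.symm (z, y)))) (by fun_prop)]
  refine lintegral_congr fun p => ?_
  simp only [G, hxb]
  rw [EuclideanSpace.norm_eq, EuclideanSpace.norm_eq (‖x‖ • _ - _)]
  congr 2
  · simp [Fin.sum_univ_three, e, e₂]
    ring
  · simp [Fin.sum_univ_three, e, e₂]
    ring

lemma lintegral_sq_add_sq (G : ℝ → ℝ≥0∞) (hG : Measurable G) :
    ∫⁻ p : ℝ × ℝ, G (p.1 ^ 2 + p.2 ^ 2) =
      ENNReal.ofReal (2 * Real.pi) * ∫⁻ s in Ioi (0 : ℝ), ENNReal.ofReal s * G (s ^ 2) := by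
  rw [← lintegral_comp_polarCoord_symm]
  have h : ∀ p : ℝ × ℝ, ENNReal.ofReal p.1 • G ((polarCoord.symm p).1 ^ 2 +
      (polarCoord.symm p).2 ^ 2) = ENNReal.ofReal p.1 * G (p.1 ^ 2) := by
    intro p
    simp only [polarCoord_symm_apply, smul_eq_mul]
    congr 2
    linear_combination p.1 ^ 2 * Real.sin_sq_add_cos_sq p.2
  simp_rw [h]
  rw [polarCoord_target, Measure.volume_eq_prod, ← Measure.prod_restrict,
    lintegral_prod _ (by fun_prop)]
  simp only [lintegral_const, Measure.restrict_apply_univ, Real.volume_Ioo]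
  rw [lintegral_mul_const _ (by fun_prop), mul_comm]
  congr 2
  ring

/-- Polar coordinates in the plane with the radial variable `s` replaced by `t = √(s² + z²)`, so
that `s ds = t dt`. -/
lemma lintegral_sq_add_sq_shift (G : ℝ → ℝ≥0∞) (hG : Measurable G) (z : ℝ) :
    ∫⁻ p : ℝ × ℝ, G (p.1 ^ 2 + p.2 ^ 2) =
      ENNReal.ofReal (2 * Real.pi) *
        ∫⁻ t in Ioi |z|, ENNReal.ofReal t * G (t ^ 2 - z ^ 2) := by
  rw [lintegral_sq_add_sq G hG]
  congr 1
  have hpos : ∀ t ∈ Ioi |z|, 0 < t ^ 2 - z ^ 2 := by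
    intro t ht
    have : |z| < t := ht
    have := sq_lt_sq' (by linarith [abs_nonneg z]) this
    rw [sq_abs] at this
    linarith
  have him : (fun t => √(t ^ 2 - z ^ 2)) '' Ioi |z| = Ioi 0 := by
    ext s
    constructor
    · rintro ⟨t, ht, rfl⟩
      exact Real.sqrt_pos.2 (hpos t ht)
    · intro hs
      have hs : 0 < s := hs
      refine ⟨√(s ^ 2 + z ^ 2), ?_, ?_⟩
      · rw [mem_Ioi, ← Real.sqrt_sq_eq_abs]
        exact Real.sqrt_lt_sqrt (sq_nonneg z) (by nlinarith)
      · simp only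
        rw [Real.sq_sqrt (by positivity), add_sub_cancel_right, Real.sqrt_sq hs.le]
  rw [← him, lintegral_image_eq_lintegral_abs_deriv_mul
    (f' := fun t => (2 * t) / (2 * √(t ^ 2 - z ^ 2))) measurableSet_Ioi]
  · refine setLIntegral_congr_fun measurableSet_Ioi fun t ht => ?_
    have h := hpos t ht
    have hs := Real.sqrt_pos.2 h
    have ht0 : 0 < t := (abs_nonneg z).trans_lt ht
    rw [← mul_assoc, ← ENNReal.ofReal_mul (abs_nonneg _), Real.sq_sqrt h.le,
      abs_of_nonneg (by positivity)]
    congr 2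
    field_simp
  · intro t ht
    have h := (((hasDerivAt_id t).pow 2).sub_const (z ^ 2)).sqrt (hpos t ht).ne'
    simpa using h.hasDerivWithinAt
  · intro t ht u hu htu
    have ht0 : 0 < t := (abs_nonneg z).trans_lt ht
    have hu0 : 0 < u := (abs_nonneg z).trans_lt hu
    have := (Real.sqrt_inj (hpos t ht).le (hpos u hu).le).1 htu
    nlinarith

/-- Tonelli's theorem on the cone `|z| < t`. -/
lemma lintegral_cone_swap (H : ℝ → ℝ → ℝ≥0∞) (hH : Measurable (Function.uncurry H)) :
    ∫⁻ z : ℝ, ∫⁻ t in Ioi |z|, H t z = ∫⁻ t in Ioi (0 : ℝ), ∫⁻ z in Ioo (-t) t, H t z := by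
  have hS : MeasurableSet {q : ℝ × ℝ | |q.1| < q.2} :=
    measurableSet_lt (by fun_prop) (by fun_prop)
  have h1 : ∀ z : ℝ, ∫⁻ t in Ioi |z|, H t z =
      ∫⁻ t, {q : ℝ × ℝ | |q.1| < q.2}.indicator (fun q => H q.2 q.1) (z, t) := by
    intro z
    rw [← lintegral_indicator measurableSet_Ioi]
    rfl
  have h2 : ∀ t : ℝ, ∫⁻ z in Ioo (-t) t, H t z =
      ∫⁻ z, {q : ℝ × ℝ | |q.1| < q.2}.indicator (fun q => H q.2 q.1) (z, t) := by
    intro t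
    rw [← lintegral_indicator measurableSet_Ioo]
    refine lintegral_congr fun z => ?_
    simp [indicator, abs_lt]
  simp_rw [h1, h2]
  rw [lintegral_lintegral_swap, ← lintegral_indicator measurableSet_Ioi]
  · refine lintegral_congr fun t => ?_
    by_cases ht : 0 < t
    · simp [ht]
    · rw [indicator_of_notMem (by simpa using ht), ← h2, Ioo_eq_empty (by linarith)]
      simp
  · refine (Measurable.indicator ?_ hS).aemeasurable
    exact hH.comp measurable_swap

/-- Newton's theorem: up to normalization, the potential at distance `r` of the sphere of radius
`t`, parametrized by height `z`. For `t = r` the integrand is singular at the endpoint `z = t`, but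
the antiderivative `-√(r² + t² - 2rz) / r` is continuous on the closed interval and monotone. -/
lemma lintegral_inv_dist {r t : ℝ} (hr : 0 < r) (ht : 0 < t) :
    ∫⁻ z in Ioo (-t) t, ENNReal.ofReal (1 / √(r ^ 2 + t ^ 2 - 2 * r * z)) =
      ENNReal.ofReal (2 * min t r / r) := by
  have hpos : ∀ z ∈ Ioo (-t) t, 0 < r ^ 2 + t ^ 2 - 2 * r * z := by
    intro z hz
    nlinarith [sq_nonneg (r - t), mul_pos hr (sub_pos.2 hz.2)]
  have hderiv : ∀ z ∈ Ioo (-t) t,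
      HasDerivAt (fun z => -√(r ^ 2 + t ^ 2 - 2 * r * z) / r)
        (1 / √(r ^ 2 + t ^ 2 - 2 * r * z)) z := by
    intro z hz
    have hs := Real.sqrt_pos.2 (hpos z hz)
    have h := (((((hasDerivAt_id z).const_mul (2 * r)).const_sub (r ^ 2 + t ^ 2)).sqrt
      (hpos z hz).ne').neg.div_const r)
    refine h.congr_deriv ?_
    simp only [id]
    field_simp
  have hcont : ContinuousOn (fun z => -√(r ^ 2 + t ^ 2 - 2 * r * z) / r) (Icc (-t) t) := by
    fun_prop
  have hint := intervalIntegral.integrableOn_deriv_of_nonneg hcont hderiv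
    (fun z _ => by positivity)
  rw [restrict_Ioo_eq_restrict_Ioc, ← ofReal_integral_eq_lintegral_ofReal hint
      (ae_of_all _ fun z => by positivity),
    ← intervalIntegral.integral_of_le (by linarith),
    intervalIntegral.integral_eq_sub_of_hasDerivAt_of_le (by linarith) hcont hderiv
      ((intervalIntegrable_iff_integrableOn_Ioc_of_le (by linarith)).2 hint)]
  congr 1
  rw [show r ^ 2 + t ^ 2 - 2 * r * t = (r - t) ^ 2 by ring,
    show r ^ 2 + t ^ 2 - 2 * r * -t = (r + t) ^ 2 by ring, Real.sqrt_sq_eq_abs,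
    Real.sqrt_sq (by positivity)]
  rcases le_total t r with h | h
  · rw [min_eq_left h, abs_of_nonneg (by linarith)]; ring
  · rw [min_eq_right h, abs_of_nonpos (by linarith)]; ring

lemma lintegral_radial {r : ℝ} (hr : 0 < r) :
    ∫⁻ t in Ioi (0 : ℝ), ENNReal.ofReal (t * Real.exp (-t) * (2 * min t r / r)) =
      ENNReal.ofReal (2 * (2 / r - Real.exp (-r) * (1 + 2 / r))) := by
  have hexp : ∀ t : ℝ, HasDerivAt (fun t => Real.exp (-t)) (-Real.exp (-t)) t := by
    intro t
    simpa using (hasDerivAt_neg t).exp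
  have hd1 : ∀ t : ℝ, HasDerivAt (fun t => -(2 / r) * ((t ^ 2 + 2 * t + 2) * Real.exp (-t)))
      (2 / r * (t ^ 2 * Real.exp (-t))) t := by
    intro t
    have h := ((((((hasDerivAt_id t).pow 2).add ((hasDerivAt_id t).const_mul 2)).add_const 2).mul
      (hexp t)).const_mul (-(2 / r)))
    refine h.congr_deriv ?_
    simp
    ring
  have hd2 : ∀ t : ℝ, HasDerivAt (fun t => -2 * ((t + 1) * Real.exp (-t)))
      (2 * (t * Real.exp (-t))) t := by
    intro t
    have h := ((((hasDerivAt_id t).add_const 1).mul (hexp t)).const_mul (-2))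
    refine h.congr_deriv ?_
    simp
    ring
  have hlim : Tendsto (fun t : ℝ => -2 * ((t + 1) * Real.exp (-t))) atTop (𝓝 0) := by
    have h1 := Real.tendsto_pow_mul_exp_neg_atTop_nhds_zero 1
    have h0 := Real.tendsto_pow_mul_exp_neg_atTop_nhds_zero 0
    have h := (h1.add h0).const_mul (-2)
    simp only [add_zero, mul_zero] at h
    refine h.congr fun t => ?_
    ring
  have hnn : ∀ t ∈ Ioi r, 0 ≤ 2 * (t * Real.exp (-t)) := by
    intro t ht
    have : 0 < t := hr.trans ht
    positivity
  have hi2 := integrableOn_Ioi_deriv_of_nonneg' (fun t _ => hd2 t) hnn hlim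
  have hc1 : Continuous fun t => 2 / r * (t ^ 2 * Real.exp (-t)) := by fun_prop
  have e1 : ∫⁻ t in Ioc 0 r, ENNReal.ofReal (t * Real.exp (-t) * (2 * min t r / r)) =
      ENNReal.ofReal (2 / r * (2 - (r ^ 2 + 2 * r + 2) * Real.exp (-r))) := by
    rw [setLIntegral_congr_fun (g := fun t => ENNReal.ofReal (2 / r * (t ^ 2 * Real.exp (-t))))
      measurableSet_Ioc (fun t ht => by
        simp only [min_eq_left ht.2]
        congr 1
        field_simp),
      ← ofReal_integral_eq_lintegral_ofReal (hc1.integrableOn_Ioc)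
        (ae_of_all _ fun t => by positivity),
      ← intervalIntegral.integral_of_le hr.le,
      intervalIntegral.integral_eq_sub_of_hasDerivAt (fun t _ => hd1 t)
        (hc1.intervalIntegrable _ _)]
    congr 1
    simp
    ring
  have e2 : ∫⁻ t in Ioi r, ENNReal.ofReal (t * Real.exp (-t) * (2 * min t r / r)) =
      ENNReal.ofReal (2 * ((r + 1) * Real.exp (-r))) := by
    rw [setLIntegral_congr_fun (g := fun t => ENNReal.ofReal (2 * (t * Real.exp (-t))))
      measurableSet_Ioi (fun t ht => by
        simp only [min_eq_right (mem_Ioi.1 ht).le]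
        congr 1
        field_simp),
      ← ofReal_integral_eq_lintegral_ofReal hi2
        ((ae_restrict_iff' measurableSet_Ioi).2 (ae_of_all _ hnn)),
      integral_Ioi_of_hasDerivAt_of_nonneg' (fun t _ => hd2 t) hnn hlim]
    congr 1
    ring
  -- Nonnegativity of both pieces is needed to add them under `ENNReal.ofReal`.
  have hn1 : 0 ≤ 2 / r * (2 - (r ^ 2 + 2 * r + 2) * Real.exp (-r)) := by
    have h : r ^ 2 + 2 * r + 2 ≤ 2 * Real.exp r := by
      have := Real.quadratic_le_exp_of_nonneg hr.le
      linarith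
    have h2 : (r ^ 2 + 2 * r + 2) * Real.exp (-r) ≤ 2 := by
      rw [Real.exp_neg, ← div_eq_mul_inv, div_le_iff₀ (Real.exp_pos r)]
      exact h
    have : 0 ≤ 2 - (r ^ 2 + 2 * r + 2) * Real.exp (-r) := by linarith
    positivity
  rw [← Ioc_union_Ioi_eq_Ioi hr.le, lintegral_union measurableSet_Ioi
    (Ioc_disjoint_Ioi le_rfl), e1, e2, ← ENNReal.ofReal_add hn1 (by positivity)]
  congr 1
  field_simp
  ring

/-- The normalized electrostatic potential of the model density `ρ*(y) = exp(-‖y‖)`: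
for `x ≠ 0` with `r = ‖x‖`,
`(1/(4π)) ∫ exp(-‖y‖)/‖x - y‖ dy = 2/r - exp(-r)(1 + 2/r)`. -/
theorem model_density_potential (x : EuclideanSpace ℝ (Fin 3)) (hx : x ≠ 0) :
    (1 / (4 * Real.pi)) * ∫ y, Real.exp (-‖y‖) / ‖x - y‖ =
      2 / ‖x‖ - Real.exp (-‖x‖) * (1 + 2 / ‖x‖) := by
  have hr : 0 < ‖x‖ := norm_pos_iff.2 hx
  have hmeas : Measurable (Function.uncurry fun a d : ℝ => ENNReal.ofReal (Real.exp (-a) / d)) := by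
    unfold Function.uncurry
    fun_prop
  have key : ∫⁻ y, ENNReal.ofReal (Real.exp (-‖y‖) / ‖x - y‖) =
      ENNReal.ofReal (2 * Real.pi) *
        ENNReal.ofReal (2 * (2 / ‖x‖ - Real.exp (-‖x‖) * (1 + 2 / ‖x‖))) := by
    rw [lintegral_axial x hx (fun a d => ENNReal.ofReal (Real.exp (-a) / d)) hmeas]
    have h1 : ∀ z : ℝ, ∫⁻ p : ℝ × ℝ,
        ENNReal.ofReal (Real.exp (-√(z ^ 2 + (p.1 ^ 2 + p.2 ^ 2))) /
          √((‖x‖ - z) ^ 2 + (p.1 ^ 2 + p.2 ^ 2))) =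
        ENNReal.ofReal (2 * Real.pi) * ∫⁻ t in Ioi |z|, ENNReal.ofReal (t * Real.exp (-t)) *
          ENNReal.ofReal (1 / √(‖x‖ ^ 2 + t ^ 2 - 2 * ‖x‖ * z)) := by
      intro z
      rw [lintegral_sq_add_sq_shift (fun q => ENNReal.ofReal (Real.exp (-√(z ^ 2 + q)) /
        √((‖x‖ - z) ^ 2 + q))) (by fun_prop) z]
      congr 1
      refine setLIntegral_congr_fun measurableSet_Ioi fun t ht => ?_
      have ht0 : 0 < t := (abs_nonneg z).trans_lt ht
      rw [← ENNReal.ofReal_mul ht0.le, ← ENNReal.ofReal_mul (by positivity),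
        add_sub_cancel, Real.sqrt_sq ht0.le,
        show (‖x‖ - z) ^ 2 + (t ^ 2 - z ^ 2) = ‖x‖ ^ 2 + t ^ 2 - 2 * ‖x‖ * z by ring]
      congr 1
      ring
    simp_rw [h1]
    rw [lintegral_const_mul' _ _ ENNReal.ofReal_ne_top, lintegral_cone_swap
      (fun t z => ENNReal.ofReal (t * Real.exp (-t)) *
          ENNReal.ofReal (1 / √(‖x‖ ^ 2 + t ^ 2 - 2 * ‖x‖ * z)))
      (by unfold Function.uncurry; fun_prop), ← lintegral_radial hr]
    congr 1
    refine setLIntegral_congr_fun measurableSet_Ioi fun t ht => ?_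
    have ht0 : 0 < t := ht
    rw [lintegral_const_mul' _ _ ENNReal.ofReal_ne_top, lintegral_inv_dist hr ht0,
      ← ENNReal.ofReal_mul (by positivity)]
  have hnn : 0 ≤ 2 / ‖x‖ - Real.exp (-‖x‖) * (1 + 2 / ‖x‖) := by
    have h := Real.quadratic_le_exp_of_nonneg hr.le
    have h2 : Real.exp (-‖x‖) * (‖x‖ + 2) ≤ 2 := by
      rw [Real.exp_neg, mul_comm, ← div_eq_mul_inv, div_le_iff₀ (Real.exp_pos _)]
      nlinarith
    have h3 : 2 / ‖x‖ - Real.exp (-‖x‖) * (1 + 2 / ‖x‖) =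
        (2 - Real.exp (-‖x‖) * (‖x‖ + 2)) / ‖x‖ := by
      field_simp
    rw [h3]
    exact div_nonneg (by linarith) hr.le
  rw [integral_eq_lintegral_of_nonneg_ae (ae_of_all _ fun y => by positivity)
    (by fun_prop : Measurable _).aestronglyMeasurable, key, ENNReal.toReal_mul,
    ENNReal.toReal_ofReal (by positivity), ENNReal.toReal_ofReal (by positivity)]
  field_simp
  ring
end

section
/- For every C > 0 there exists K > 0 such that for all r > 0, r · ∫_{0}^{∞} s · exp(−(r/C)·s) · log((s + 1)/|s − 1|) ds ≤ K/r². -/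
open MeasureTheory

/-!
With `a = r / C` and `L s = log ((s + 1) / |s - 1|)`, the claim is that `a³ ∫ s exp(-a s) L s ds` is
bounded uniformly in `a > 0`. Away from the singularity, for `s ∉ (1/2, 2]`, `log x ≤ x - 1` gives
`L s ≤ 4 s`, and this part is controlled by `4 a³ ∫ s² exp(-a s) ds = 8`. On `(1/2, 2]` the bound
`(a s)³ exp(-a s) ≤ 6` gives `a³ s exp(-a s) ≤ 6 / s² ≤ 24`, and `L s ≤ log 3 - log (s - 1)` (`log`
being even in Mathlib) is integrable there, with an integral that does not depend on `a`.
-/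

/-- Dominating function, up to a factor `a⁻³`, for the integrand near its singularity `s = 1`. -/
noncomputable def nearSingularity : ℝ → ℝ :=
  Set.indicator (Set.Ioc (1 / 2 : ℝ) 2) (fun s => 24 * (Real.log 3 - Real.log (s - 1)))

lemma integrable_nearSingularity : Integrable nearSingularity := by
  unfold nearSingularity
  rw [integrable_indicator_iff measurableSet_Ioc]
  have h : IntervalIntegrable (fun s : ℝ => Real.log (s - 1)) volume (1 / 2) 2 := by
    have := (intervalIntegral.intervalIntegrable_log' (a := 1 / 2 - 1) (b := 2 - 1)).comp_sub_right 1
    simpa using this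
  have h2 : IntervalIntegrable (fun s : ℝ => 24 * (Real.log 3 - Real.log (s - 1)))
      volume (1 / 2) 2 := (intervalIntegrable_const.sub h).const_mul 24
  exact (intervalIntegrable_iff_integrableOn_Ioc_of_le (by norm_num)).1 h2

lemma nearSingularity_nonneg (s : ℝ) : 0 ≤ nearSingularity s := by
  unfold nearSingularity
  refine Set.indicator_nonneg (fun s hs => ?_) s
  have h3 : 0 ≤ Real.log 3 := Real.log_nonneg (by norm_num)
  have h1 : Real.log (s - 1) ≤ 0 := by
    rw [← Real.log_abs]
    refine Real.log_nonpos (abs_nonneg _) ?_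
    rw [abs_le]
    constructor <;> linarith [hs.1, hs.2]
  linarith

lemma log_kernel_nonneg {s : ℝ} (hs : 0 < s) : 0 ≤ Real.log ((s + 1) / |s - 1|) := by
  rcases eq_or_ne s 1 with rfl | h
  · simp
  · have hp : 0 < |s - 1| := abs_pos.2 (sub_ne_zero.2 h)
    refine Real.log_nonneg ((one_le_div hp).2 ?_)
    rw [abs_le]
    constructor <;> linarith

lemma log_kernel_le_far {s : ℝ} (hs : 0 < s) (h : s ∉ Set.Ioc (1 / 2 : ℝ) 2) :
    Real.log ((s + 1) / |s - 1|) ≤ 4 * s := by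
  rcases le_or_gt s (1 / 2) with h1 | h1
  · have habs : |s - 1| = 1 - s := by rw [abs_of_neg (by linarith)]; ring
    rw [habs]
    have hp : 0 < 1 - s := by linarith
    refine (Real.log_le_sub_one_of_pos (by positivity)).trans ?_
    rw [sub_le_iff_le_add, div_le_iff₀ hp]
    nlinarith
  · have h2 : 2 < s := by
      by_contra hc
      exact h ⟨h1, not_lt.1 hc⟩
    have hp : 0 < s - 1 := by linarith
    rw [abs_of_pos hp]
    refine (Real.log_le_sub_one_of_pos (by positivity)).trans ?_
    rw [sub_le_iff_le_add, div_le_iff₀ hp]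
    nlinarith

lemma log_kernel_le_near {s : ℝ} (h : s ∈ Set.Ioc (1 / 2 : ℝ) 2) :
    Real.log ((s + 1) / |s - 1|) ≤ Real.log 3 - Real.log (s - 1) := by
  rcases eq_or_ne s 1 with rfl | h1
  · simpa using Real.log_nonneg (by norm_num : (1 : ℝ) ≤ 3)
  · have hp : |s - 1| ≠ 0 := abs_ne_zero.2 (sub_ne_zero.2 h1)
    rw [Real.log_div (by linarith [h.1]) hp, Real.log_abs]
    have := Real.log_le_log (by linarith [h.1] : 0 < s + 1) (by linarith [h.2] : s + 1 ≤ 3)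
    linarith

lemma integrand_le {a s : ℝ} (ha : 0 < a) (hs : 0 < s) :
    s * Real.exp (-a * s) * Real.log ((s + 1) / |s - 1|)
      ≤ 4 * (s ^ (3 - 1 : ℝ) * Real.exp (-(a * s))) + (1 / a) ^ 3 * nearSingularity s := by
  have he : (3 - 1 : ℝ) = (2 : ℕ) := by norm_num
  rw [he, Real.rpow_natCast, neg_mul]
  have hE := Real.exp_pos (-(a * s))
  by_cases h : s ∈ Set.Ioc (1 / 2 : ℝ) 2
  · have hg : nearSingularity s = 24 * (Real.log 3 - Real.log (s - 1)) :=
      Set.indicator_of_mem h _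
    have hcoef : s * Real.exp (-(a * s)) ≤ (1 / a) ^ 3 * 24 := by
      have h6 : (a * s) ^ 3 * Real.exp (-(a * s)) ≤ 6 := by
        have := Real.pow_div_factorial_le_exp (a * s) (by positivity) 3
        rw [Real.exp_neg, ← div_eq_mul_inv, div_le_iff₀ (Real.exp_pos _)]
        norm_num [Nat.factorial] at this
        linarith
      have hs2 : 1 ≤ 4 * s ^ 2 := by nlinarith [h.1]
      rw [one_div, inv_pow, ← div_eq_inv_mul, le_div_iff₀ (by positivity)]
      have hnn : 0 ≤ a ^ 3 * s * Real.exp (-(a * s)) := by positivity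
      nlinarith [mul_le_mul_of_nonneg_left hs2 hnn]
    rw [hg]
    have hL := log_kernel_nonneg hs
    have hL' := log_kernel_le_near h
    calc _ ≤ (1 / a) ^ 3 * 24 * (Real.log 3 - Real.log (s - 1)) :=
          mul_le_mul hcoef hL' hL (by positivity)
      _ ≤ _ := by
          have : 0 ≤ 4 * (s ^ 2 * Real.exp (-(a * s))) := by positivity
          linarith
  · have hg : nearSingularity s = 0 := Set.indicator_of_notMem h _
    rw [hg]
    have := mul_le_mul_of_nonneg_left (log_kernel_le_far hs h) (mul_pos hs hE).le
    linarith

/-- For every `C > 0` there is `K > 0` such that for all `r > 0`,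
`r ∫₀^∞ s exp(-(r/C)s) log((s+1)/|s-1|) ds ≤ K/r²`. -/
theorem radial_integral_bound (C : ℝ) (hC : 0 < C) :
    ∃ K > 0, ∀ r : ℝ, 0 < r →
      r * ∫ s in Set.Ioi (0 : ℝ),
          s * Real.exp (-(r / C) * s) * Real.log ((s + 1) / |s - 1|)
        ≤ K / r ^ 2 := by
  have hG : 0 ≤ ∫ s in Set.Ioi (0 : ℝ), nearSingularity s :=
    integral_nonneg nearSingularity_nonneg
  refine ⟨C ^ 3 * (8 + ∫ s in Set.Ioi (0 : ℝ), nearSingularity s), by positivity, fun r hr => ?_⟩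
  have ha : 0 < r / C := by positivity
  have hval := Real.integral_rpow_mul_exp_neg_mul_Ioi (a := 3) (by norm_num) ha
  have hGamma : Real.Gamma 3 = 2 := by
    norm_num [Nat.factorial]
  have h3 : (1 / (r / C)) ^ (3 : ℝ) = (1 / (r / C)) ^ 3 := by
    exact_mod_cast Real.rpow_natCast (1 / (r / C)) 3
  rw [hGamma, h3] at hval
  -- The value of the integral is nonzero, so it is not the junk value of a divergent integral.
  have hint1 : IntegrableOn
      (fun s : ℝ => s ^ (3 - 1 : ℝ) * Real.exp (-(r / C * s))) (Set.Ioi 0) := by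
    refine Integrable.of_integral_ne_zero ?_
    rw [hval]
    positivity
  have hint2 : IntegrableOn nearSingularity (Set.Ioi 0) :=
    integrable_nearSingularity.integrableOn
  have hmono : ∫ s in Set.Ioi (0 : ℝ),
        s * Real.exp (-(r / C) * s) * Real.log ((s + 1) / |s - 1|)
      ≤ ∫ s in Set.Ioi (0 : ℝ), (4 * (s ^ (3 - 1 : ℝ) * Real.exp (-(r / C * s)))
          + (1 / (r / C)) ^ 3 * nearSingularity s) := by
    refine integral_mono_of_nonneg ?_ ((hint1.const_mul 4).add (hint2.const_mul _)) ?_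
    · filter_upwards [ae_restrict_mem measurableSet_Ioi] with s hs
      have hs' : 0 < s := hs
      have := log_kernel_nonneg hs'
      simp only [Pi.zero_apply]
      positivity
    · filter_upwards [ae_restrict_mem measurableSet_Ioi] with s hs
      exact integrand_le ha hs
  rw [integral_add (hint1.const_mul 4) (hint2.const_mul _), integral_const_mul,
    integral_const_mul, hval] at hmono
  refine (mul_le_mul_of_nonneg_left hmono hr.le).trans (le_of_eq ?_)
  field_simp
  ring
end

section
/- Let C > 0 and let ρ : ℝ³ → ℝ be continuous with |ρ(x)| ≤ C·exp(−‖x‖/C) for all x ∈ ℝ³. Then ∫_{ℝ³} ∫_{ℝ³} ρ(x)·ρ(y)/‖x − y‖ dx dy ≥ 0; that is, the Coulomb energy of ρ is nonnegative. -/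
/-!
The Coulomb kernel is a superposition of Gaussians,
`1 / r = (2 / √π) ∫₀^∞ exp (-t² r²) dt`, and each Gaussian kernel is positive definite because it
is, up to a positive constant, an autocorrelation:
`exp (-b ‖x - y‖²) * ∫ exp (-4b ‖z‖²) dz = ∫ exp (-2b ‖x - z‖²) * exp (-2b ‖y - z‖²) dz`.
By Fubini, the Gaussian energy of an integrable density `φ` is therefore a positive multiple of
`∫ (∫ φ(x) exp (-2b ‖x - z‖²) dx)² dz ≥ 0` (`gauss_energy_nonneg`), and, by Fubini again, the
Coulomb energy is a positive multiple of the integral over `t > 0` of the Gaussian energies with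
`b = t²`.

The second exchange needs `ρ(x) ρ(y) / ‖x - y‖` to be integrable on the product space
(`integrable_coulomb`). Since `‖x‖ + ‖y‖ ≥ (‖x‖ + ‖x - y‖) / 2`, it is dominated by
`C² exp (-‖x‖ / 2C) * exp (-‖x - y‖ / 2C) / ‖x - y‖`, which a shear turns into a product of two
integrable functions.
-/

open MeasureTheory
open Set

local notation "E" => EuclideanSpace ℝ (Fin 3)

/-- Completing the square around the midpoint of `x` and `y`: the product of two Gaussians centred
at `x` and `y` is a Gaussian centred at the midpoint, times a Gaussian of `x - y`. -/
lemma gauss_identity (b : ℝ) (x y z : E) :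
    Real.exp (-(2 * b) * ‖x - z‖ ^ 2) * Real.exp (-(2 * b) * ‖y - z‖ ^ 2) =
      Real.exp (-b * ‖x - y‖ ^ 2) *
        Real.exp (-(4 * b) * ‖z - (2⁻¹ : ℝ) • (x + y)‖ ^ 2) := by
  rw [← Real.exp_add, ← Real.exp_add]
  congr 1
  have h := parallelogram_law_with_norm ℝ (x - z) (y - z)
  have h1 : x - z + (y - z) = (-2 : ℝ) • (z - (2⁻¹ : ℝ) • (x + y)) := by module
  have h2 : x - z - (y - z) = x - y := by abel
  rw [h1, h2, norm_smul, show ‖(-2 : ℝ)‖ = 2 by norm_num] at h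
  linear_combination b * h

lemma integrable_gauss {a : ℝ} (ha : 0 < a) (m : E) :
    Integrable (fun z : E => Real.exp (-a * ‖z - m‖ ^ 2)) := by
  have h : Integrable (fun z : E => Real.exp (-a * ‖z‖ ^ 2)) := by
    -- The value of the integral is known and nonzero, whereas a non-integrable function has
    -- integral `0` by convention.
    by_contra hc
    have h1 := integral_undef hc
    rw [GaussianFourier.integral_rexp_neg_mul_sq_norm ha] at h1
    have : 0 < (Real.pi / a) ^ ((Module.finrank ℝ E : ℝ) / 2) := by positivity
    exact this.ne' h1
  exact h.comp_sub_right m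

/-- The Gaussian kernel is positive definite. -/
lemma gauss_energy_nonneg {b : ℝ} (hb : 0 < b) {φ : E → ℝ} (hc : Continuous φ)
    (hφ : Integrable φ) :
    0 ≤ ∫ p : E × E, φ p.1 * φ p.2 * Real.exp (-b * ‖p.1 - p.2‖ ^ 2) := by
  set K : ℝ := ∫ z : E, Real.exp (-(4 * b) * ‖z‖ ^ 2) with hK
  have hKpos : 0 < K := by
    rw [hK, GaussianFourier.integral_rexp_neg_mul_sq_norm (by positivity)]
    positivity
  have hKm (m : E) : ∫ z : E, Real.exp (-(4 * b) * ‖z - m‖ ^ 2) = K :=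
    integral_sub_right_eq_self (fun z : E => Real.exp (-(4 * b) * ‖z‖ ^ 2)) m
  let F : E × E → E → ℝ := fun p z =>
    (φ p.1 * Real.exp (-(2 * b) * ‖p.1 - z‖ ^ 2)) * (φ p.2 * Real.exp (-(2 * b) * ‖p.2 - z‖ ^ 2))
  have hF (p : E × E) (z : E) : F p z = (φ p.1 * φ p.2 * Real.exp (-b * ‖p.1 - p.2‖ ^ 2)) *
      Real.exp (-(4 * b) * ‖z - (2⁻¹ : ℝ) • (p.1 + p.2)‖ ^ 2) := by
    simp only [F]
    linear_combination φ p.1 * φ p.2 * gauss_identity b p.1 p.2 z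
  have hpair : Integrable (fun p : E × E => φ p.1 * φ p.2) := hφ.mul_prod hφ
  have hint : Integrable (Function.uncurry F) (volume.prod volume) := by
    have hcont : Continuous (Function.uncurry F) := by
      simp only [Function.uncurry_def, F]
      fun_prop
    rw [integrable_prod_iff hcont.aestronglyMeasurable]
    constructor
    · refine Filter.Eventually.of_forall fun p => ?_
      simp only [Function.uncurry_apply_pair, hF]
      exact (integrable_gauss (by positivity) _).const_mul _
    · simp only [Function.uncurry_apply_pair, hF, norm_mul _ (Real.exp _), Real.norm_eq_abs, Real.abs_exp,
        integral_const_mul, hKm]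
      refine Integrable.mul_const ?_ _
      refine hpair.norm.mono' (by fun_prop) (Filter.Eventually.of_forall fun p => ?_)
      rw [Real.norm_of_nonneg (by positivity)]
      refine mul_le_of_le_one_right (by positivity) ?_
      rw [Real.exp_le_one_iff]
      nlinarith [sq_nonneg ‖p.1 - p.2‖]
  have hswap := integral_integral_swap hint
  have hL : ∫ p : E × E, ∫ z, F p z =
      (∫ p : E × E, φ p.1 * φ p.2 * Real.exp (-b * ‖p.1 - p.2‖ ^ 2)) * K := by
    simp only [hF, integral_const_mul, hKm, integral_mul_const]
  have hR : 0 ≤ ∫ z, ∫ p : E × E, F p z := by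
    refine integral_nonneg fun z => ?_
    have := integral_prod_mul (μ := (volume : Measure E)) (ν := (volume : Measure E))
      (fun x => φ x * Real.exp (-(2 * b) * ‖x - z‖ ^ 2))
      (fun x => φ x * Real.exp (-(2 * b) * ‖x - z‖ ^ 2))
    change 0 ≤ ∫ p : E × E, F p z
    rw [show (∫ p : E × E, F p z) = _ from this]
    exact mul_self_nonneg _
  rw [← hswap, hL] at hR
  exact nonneg_of_mul_nonneg_left hR hKpos

lemma integrable_exp_norm {a : ℝ} (ha : 0 < a) :
    Integrable (fun x : E => Real.exp (-a * ‖x‖)) := by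
  rw [integrable_fun_norm_addHaar (μ := (volume : Measure E)) (f := fun r => Real.exp (-a * r))]
  have := integrableOn_rpow_mul_exp_neg_mul_rpow (s := 2) (p := 1) (b := a) (by norm_num) (by norm_num) ha
  simpa using this

/-- The singularity at the origin is harmless: the radial volume element in dimension three
contributes a factor `r ^ 2`. -/
lemma integrable_exp_norm_div {a : ℝ} (ha : 0 < a) :
    Integrable (fun x : E => Real.exp (-a * ‖x‖) / ‖x‖) := by
  rw [integrable_fun_norm_addHaar (μ := (volume : Measure E)) (f := fun r => Real.exp (-a * r) / r)]
  have := integrableOn_rpow_mul_exp_neg_mul_rpow (s := 1) (p := 1) (b := a) (by norm_num) (by norm_num) ha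
  refine this.congr_fun (fun r hr => ?_) measurableSet_Ioi
  have : (r : ℝ) ≠ 0 := ne_of_gt hr
  simp
  field_simp

lemma integrable_coulomb {C : ℝ} (hC : 0 < C) {ρ : E → ℝ} (hρ : Continuous ρ)
    (hbound : ∀ x : E, |ρ x| ≤ C * Real.exp (-‖x‖ / C)) :
    Integrable (fun p : E × E => ρ p.1 * ρ p.2 / ‖p.1 - p.2‖) (volume.prod volume) := by
  have ha : 0 < 1 / (2 * C) := by positivity
  have h := ((integrable_exp_norm ha).mul_prod (integrable_exp_norm_div ha)).const_mul (C ^ 2)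
  -- The shear `(x, y) ↦ (x, y - x)` preserves the measure.
  have h' := ((measurePreserving_prod_sub (volume : Measure E) (volume : Measure E)).integrable_comp
    h.aestronglyMeasurable).2 h
  refine h'.mono' ?_ (Filter.Eventually.of_forall fun p => ?_)
  · have : Measurable ρ := hρ.measurable
    exact (((this.comp measurable_fst).mul (this.comp measurable_snd)).div
      (measurable_fst.sub measurable_snd).norm).aestronglyMeasurable
  · obtain ⟨x, y⟩ := p
    simp only [Function.comp_apply, norm_div, norm_mul, Real.norm_eq_abs, abs_norm]
    rw [norm_sub_rev y x, ← mul_div_assoc, ← mul_div_assoc]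
    refine div_le_div_of_nonneg_right ?_ (norm_nonneg _)
    calc |ρ x| * |ρ y| ≤ (C * Real.exp (-‖x‖ / C)) * (C * Real.exp (-‖y‖ / C)) := by
          gcongr <;> apply hbound
      _ = C ^ 2 * Real.exp (-‖x‖ / C + -‖y‖ / C) := by rw [Real.exp_add]; ring
      _ ≤ C ^ 2 * Real.exp (-(1 / (2 * C)) * ‖x‖ + -(1 / (2 * C)) * ‖x - y‖) := by
          refine mul_le_mul_of_nonneg_left (Real.exp_le_exp.2 ?_) (by positivity)
          have h1 := norm_sub_le x y
          have h2 := norm_nonneg y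
          rw [← sub_nonneg]
          have : -(1 / (2 * C)) * ‖x‖ + -(1 / (2 * C)) * ‖x - y‖ - (-‖x‖ / C + -‖y‖ / C)
            = (‖x‖ + 2 * ‖y‖ - ‖x - y‖) / (2 * C) := by field_simp; ring
          rw [this]
          apply div_nonneg <;> linarith
      _ = _ := by rw [Real.exp_add]

lemma ae_ne : ∀ᵐ p : E × E ∂(volume.prod volume), p.1 ≠ p.2 := by
  have hm : MeasurableSet {p : E × E | p.1 ≠ p.2} := measurableSet_diagonal.compl
  rw [Measure.ae_prod_iff_ae_ae hm]
  refine Filter.Eventually.of_forall fun x => ?_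
  filter_upwards [compl_mem_ae_iff.2 (measure_singleton x)] with y hy
  exact fun h => hy h.symm

/-- The Gaussian representation of `1 / r`. It also holds at `r = 0`, where the integrand is not
integrable and both sides are `0` by convention. -/
lemma integral_gauss_t {r : ℝ} (hr : 0 ≤ r) :
    ∫ t in Ioi (0 : ℝ), Real.exp (-t ^ 2 * r ^ 2) = √Real.pi / 2 / r := by
  have := integral_gaussian_Ioi (r ^ 2)
  rw [Real.sqrt_div Real.pi_nonneg, Real.sqrt_sq hr] at this
  rw [div_right_comm, ← this]
  congr 1 with t
  congr 1
  ring

/-- The Coulomb self-interaction energy of a continuous, exponentially localized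
charge density is nonnegative. -/
theorem coulomb_energy_nonneg
    (C : ℝ) (hC : 0 < C) (ρ : EuclideanSpace ℝ (Fin 3) → ℝ)
    (hρ : Continuous ρ)
    (hbound : ∀ x : EuclideanSpace ℝ (Fin 3), |ρ x| ≤ C * Real.exp (-‖x‖ / C)) :
    0 ≤ ∫ x : EuclideanSpace ℝ (Fin 3), ∫ y, ρ x * ρ y / ‖x - y‖ := by
  have hcoul := integrable_coulomb hC hρ hbound
  have hρi : Integrable ρ := by
    have ha : 0 < 1 / C := by positivity
    refine ((integrable_exp_norm ha).const_mul C).mono' hρ.aestronglyMeasurable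
      (Filter.Eventually.of_forall fun x => ?_)
    refine (hbound x).trans_eq ?_
    congr 2
    ring
  rw [← integral_prod (fun p : E × E => ρ p.1 * ρ p.2 / ‖p.1 - p.2‖) hcoul]
  let F : E × E → ℝ → ℝ := fun p t => ρ p.1 * ρ p.2 * Real.exp (-t ^ 2 * ‖p.1 - p.2‖ ^ 2)
  have hint : Integrable (Function.uncurry F)
      ((volume.prod volume).prod (volume.restrict (Ioi (0 : ℝ)))) := by
    have hcont : Continuous (Function.uncurry F) := by
      simp only [Function.uncurry_def, F]; fun_prop
    rw [integrable_prod_iff hcont.aestronglyMeasurable]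
    constructor
    -- On the diagonal the integrand does not decay in `t`, so the diagonal has to be discarded.
    · filter_upwards [ae_ne] with p hp
      have hpos : 0 < ‖p.1 - p.2‖ ^ 2 := pow_pos (norm_pos_iff.2 (sub_ne_zero.2 hp)) 2
      refine (((integrable_exp_neg_mul_sq hpos).integrableOn (s := Ioi 0)).const_mul
        (ρ p.1 * ρ p.2)).congr (Filter.Eventually.of_forall fun t => ?_)
      simp only [Function.uncurry_apply_pair, F]
      congr 2
      ring
    · refine (hcoul.norm.const_mul (√Real.pi / 2)).congr (Filter.Eventually.of_forall fun p => ?_)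
      simp only [Function.uncurry_apply_pair, F, norm_mul _ (Real.exp _), Real.norm_eq_abs,
        Real.abs_exp, integral_const_mul, integral_gauss_t (norm_nonneg _), abs_div, abs_norm]
      ring
  have hswap := integral_integral_swap hint
  have hL : ∫ p : E × E, ∫ t in Ioi (0 : ℝ), F p t =
      (∫ p : E × E, ρ p.1 * ρ p.2 / ‖p.1 - p.2‖) * (√Real.pi / 2) := by
    simp only [F, integral_const_mul, integral_gauss_t (norm_nonneg _)]
    rw [← integral_mul_const]
    congr 1 with p
    ring
  have hR : 0 ≤ ∫ t in Ioi (0 : ℝ), ∫ p : E × E, F p t :=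
    setIntegral_nonneg measurableSet_Ioi fun t ht =>
      gauss_energy_nonneg (pow_pos (mem_Ioi.1 ht) 2) hρ hρi
  have hLR := hL.symm.trans hswap
  exact nonneg_of_mul_nonneg_left (hLR ▸ hR) (by positivity)
end

section
/- Let C > 0 and let ρ : ℝ³ → ℝ be continuous with |ρ(x)| ≤ C·exp(−‖x‖/C) for all x ∈ ℝ³. Then the Newtonian potential V(x) = ∫_{ℝ³} ρ(y)/‖x − y‖ dy is continuously differentiable on ℝ³ and its gradient is given by differentiation under the integral sign: ∇V(x) = −∫_{ℝ³} ρ(y)·(x − y)/‖x − y‖³ dy for every x ∈ ℝ³. -/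
/-!
The kernel `1/‖z‖` is regularized to `1/√(‖z‖² + ε²)`, whose derivative is bounded by `1/ε²`, so that
for `ε > 0` the potential can be differentiated under the integral sign by the standard dominated
theorem (`hasFDerivAt_regPotential`). After the substitution `z = x - y`, the exponential decay of `ρ`
gives, for `‖x‖ ≤ R`, the bound `|ρ (x - z)| ≤ M exp (-‖z‖/C)` with `M` depending only on `R`. Since
every regularized kernel derivative is bounded by `‖z‖⁻²`, and `exp (-‖z‖/C) ‖z‖⁻²` is integrable in
dimension three (polar coordinates), dominated convergence shows that as `ε → 0` the derivatives
converge locally uniformly (`tendstoUniformlyOn_regGradient`) and that the potentials converge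
pointwise (`tendsto_regPotential`). Hence the limit potential is differentiable with the expected
derivative, and the same domination gives the continuity of that derivative.
-/

open MeasureTheory Filter Topology

namespace NewtonianPotential

/-- Three-dimensional Euclidean space. -/
local notation "E3" => EuclideanSpace ℝ (Fin 3)

/-! ### The regularized kernel and its derivative -/

/-- The regularized distance `√(‖z‖² + ε²)`; it equals `‖z‖` for `ε = 0`. -/
noncomputable def regNorm (ε : ℝ) (z : E3) : ℝ := √(‖z‖ ^ 2 + ε ^ 2)

/-- The derivative of `z ↦ (regNorm ε z)⁻¹` as a continuous linear form. For `ε = 0` and `z = 0`,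
where the kernel is singular, its value is `0`. -/
noncomputable def regKernelDeriv (ε : ℝ) (z : E3) : E3 →L[ℝ] ℝ :=
  (-((regNorm ε z) ^ 3)⁻¹) • innerSL ℝ z

lemma regNorm_zero (z : E3) : regNorm 0 z = ‖z‖ := by
  simp [regNorm]

lemma norm_le_regNorm (ε : ℝ) (z : E3) : ‖z‖ ≤ regNorm ε z :=
  Real.le_sqrt_of_sq_le (by nlinarith [sq_nonneg ε])

lemma le_regNorm (ε : ℝ) (z : E3) : ε ≤ regNorm ε z :=
  Real.le_sqrt_of_sq_le (by nlinarith [sq_nonneg ‖z‖])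

lemma regNorm_nonneg (ε : ℝ) (z : E3) : 0 ≤ regNorm ε z := Real.sqrt_nonneg _

lemma continuous_regNorm (z : E3) : Continuous fun ε => regNorm ε z := by
  unfold regNorm; fun_prop

lemma measurable_regNorm (ε : ℝ) : Measurable (regNorm ε) := by
  have : Continuous (regNorm ε) := by unfold regNorm; fun_prop
  exact this.measurable

lemma aestronglyMeasurable_regKernelDeriv (ε : ℝ) :
    AEStronglyMeasurable (regKernelDeriv ε) (volume : Measure E3) := by
  unfold regKernelDeriv
  have h : AEStronglyMeasurable (fun z : E3 => -((regNorm ε z) ^ 3)⁻¹) :=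
    (((measurable_regNorm ε).pow_const 3).inv.neg).aestronglyMeasurable
  exact h.smul (innerSL ℝ (E := E3)).continuous.aestronglyMeasurable

lemma norm_regKernelDeriv_le_inv_sq_regNorm (ε : ℝ) (z : E3) :
    ‖regKernelDeriv ε z‖ ≤ (regNorm ε z ^ 2)⁻¹ := by
  have h0 := regNorm_nonneg ε z
  have h1 := norm_le_regNorm ε z
  rw [regKernelDeriv, norm_smul, innerSL_apply_norm, norm_neg, norm_inv, Real.norm_eq_abs,
    abs_of_nonneg (pow_nonneg h0 3)]
  rcases h0.eq_or_lt with h | h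
  · simp [← h]
  · calc (regNorm ε z ^ 3)⁻¹ * ‖z‖ ≤ (regNorm ε z ^ 3)⁻¹ * regNorm ε z := by gcongr
      _ = (regNorm ε z ^ 2)⁻¹ := by field_simp

lemma norm_regKernelDeriv_le (ε : ℝ) (z : E3) :
    ‖regKernelDeriv ε z‖ ≤ (‖z‖ ^ 2)⁻¹ := by
  rcases eq_or_ne z 0 with rfl | hz
  · simp [regKernelDeriv]
  · refine (norm_regKernelDeriv_le_inv_sq_regNorm ε z).trans ?_
    have := norm_pos_iff.2 hz
    gcongr
    exact norm_le_regNorm ε z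

lemma norm_regKernelDeriv_le_of_pos {ε : ℝ} (hε : 0 < ε) (z : E3) :
    ‖regKernelDeriv ε z‖ ≤ (ε ^ 2)⁻¹ := by
  refine (norm_regKernelDeriv_le_inv_sq_regNorm ε z).trans ?_
  gcongr
  exact le_regNorm ε z

lemma hasFDerivAt_inv_regNorm {ε : ℝ} (hε : 0 < ε) (z : E3) :
    HasFDerivAt (fun z => (regNorm ε z)⁻¹) (regKernelDeriv ε z) z := by
  have hs : 0 < regNorm ε z := hε.trans_le (le_regNorm ε z)
  have h1 : HasFDerivAt (fun z : E3 => ‖z‖ ^ 2 + ε ^ 2) (2 • innerSL ℝ z) z :=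
    (hasStrictFDerivAt_norm_sq z).hasFDerivAt.add_const _
  have h2 : HasFDerivAt (regNorm ε) ((1 / (2 * regNorm ε z)) • (2 • innerSL ℝ z)) z :=
    h1.sqrt (by positivity)
  have h3 := (hasDerivAt_inv hs.ne').comp_hasFDerivAt z h2
  refine h3.congr_fderiv ?_
  ext v
  simp only [regKernelDeriv, smul_apply, smul_eq_mul, nsmul_eq_mul]
  field_simp
  simp

lemma tendsto_regKernelDeriv (z : E3) :
    Tendsto (fun ε => regKernelDeriv ε z) (𝓝 0) (𝓝 (regKernelDeriv 0 z)) := by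
  rcases eq_or_ne z 0 with rfl | hz
  · simp [regKernelDeriv]
  · have h : Tendsto (fun ε => regNorm ε z) (𝓝 0) (𝓝 (regNorm 0 z)) :=
      (continuous_regNorm z).tendsto 0
    have h0 : regNorm 0 z ≠ 0 := by simpa [regNorm_zero] using hz
    exact (((h.pow 3).inv₀ (pow_ne_zero 3 h0)).neg).smul_const _

/-! ### Integrability of the dominating functions -/

lemma integrable_exp_neg_norm {C : ℝ} (hC : 0 < C) :
    Integrable (fun z : E3 => Real.exp (-‖z‖ / C)) := by
  rw [integrable_fun_norm_addHaar volume (f := fun r : ℝ => Real.exp (-r / C))]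
  have := integrableOn_rpow_mul_exp_neg_mul_rpow (p := 1) (s := 2) (b := C⁻¹) (by norm_num)
    one_pos (inv_pos.2 hC)
  refine this.congr_fun (fun r _ => ?_) measurableSet_Ioi
  simp only [Real.rpow_one, Real.rpow_two, finrank_euclideanSpace, Fintype.card_fin, smul_eq_mul]
  congr 2
  ring

lemma integrable_exp_neg_norm_mul {C : ℝ} (hC : 0 < C) :
    Integrable (fun z : E3 => Real.exp (-‖z‖ / C) * (‖z‖ ^ 2)⁻¹) := by
  rw [integrable_fun_norm_addHaar volume (f := fun r : ℝ => Real.exp (-r / C) * (r ^ 2)⁻¹)]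
  have := integrableOn_rpow_mul_exp_neg_mul_rpow (p := 1) (s := 0) (b := C⁻¹) (by norm_num)
    one_pos (inv_pos.2 hC)
  refine this.congr_fun (fun r hr => ?_) measurableSet_Ioi
  have hr' : r ≠ 0 := (Set.mem_Ioi.1 hr).ne'
  simp only [Real.rpow_one, Real.rpow_zero, finrank_euclideanSpace, Fintype.card_fin, smul_eq_mul]
  field_simp

/-! ### Potentials of exponentially localized densities -/

section Density

variable {C : ℝ} {ρ : EuclideanSpace ℝ (Fin 3) → ℝ}

/-- Locally uniformly in `x`, the translates `ρ (x - ·)` share one exponential bound. -/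
lemma abs_translate_le (hC : 0 < C)
    (hbound : ∀ x : E3, |ρ x| ≤ C * Real.exp (-‖x‖ / C)) {R : ℝ} {x : E3} (hx : ‖x‖ ≤ R) (z : E3) :
    |ρ (x - z)| ≤ C * Real.exp (R / C) * Real.exp (-‖z‖ / C) := by
  refine (hbound _).trans ?_
  rw [mul_assoc, ← Real.exp_add, ← add_div]
  gcongr
  have := norm_sub_norm_le z x
  rw [norm_sub_rev] at this
  linarith

lemma norm_smul_regKernelDeriv_le (hC : 0 < C)
    (hbound : ∀ x : E3, |ρ x| ≤ C * Real.exp (-‖x‖ / C)) {R : ℝ} {x : E3} (hx : ‖x‖ ≤ R)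
    (ε : ℝ) (z : E3) :
    ‖ρ (x - z) • regKernelDeriv ε z‖ ≤
      C * Real.exp (R / C) * (Real.exp (-‖z‖ / C) * (‖z‖ ^ 2)⁻¹) := by
  rw [norm_smul, ← mul_assoc]
  gcongr
  · exact abs_translate_le hC hbound hx z
  · exact norm_regKernelDeriv_le ε z

lemma aestronglyMeasurable_smul_regKernelDeriv (hρ : Continuous ρ) (ε : ℝ) (x : E3) :
    AEStronglyMeasurable (fun z => ρ (x - z) • regKernelDeriv ε z) :=
  (by fun_prop : Continuous fun z => ρ (x - z)).aestronglyMeasurable.smul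
    (aestronglyMeasurable_regKernelDeriv ε)

lemma integrable_smul_regKernelDeriv (hC : 0 < C) (hρ : Continuous ρ)
    (hbound : ∀ x : E3, |ρ x| ≤ C * Real.exp (-‖x‖ / C)) (ε : ℝ) (x : E3) :
    Integrable (fun z => ρ (x - z) • regKernelDeriv ε z) :=
  ((integrable_exp_neg_norm_mul hC).const_mul _).mono'
    (aestronglyMeasurable_smul_regKernelDeriv hρ ε x)
    (Eventually.of_forall fun z => norm_smul_regKernelDeriv_le hC hbound le_rfl ε z)

lemma integral_regKernelDeriv_swap (ε : ℝ) (x : E3) :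
    ∫ y, ρ y • regKernelDeriv ε (x - y) = ∫ z, ρ (x - z) • regKernelDeriv ε z := by
  rw [← integral_sub_left_eq_self (fun z => ρ (x - z) • regKernelDeriv ε z) volume x]
  simp

lemma integrable_density (hC : 0 < C) (hρ : Continuous ρ)
    (hbound : ∀ x : E3, |ρ x| ≤ C * Real.exp (-‖x‖ / C)) : Integrable ρ :=
  ((integrable_exp_neg_norm hC).const_mul C).mono' hρ.aestronglyMeasurable
    (Eventually.of_forall hbound)

lemma aestronglyMeasurable_regPotential (hρ : Continuous ρ) (ε : ℝ) (x : E3) :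
    AEStronglyMeasurable (fun y => ρ y * (regNorm ε (x - y))⁻¹) :=
  (hρ.measurable.mul
    ((measurable_regNorm ε).comp (measurable_const.sub measurable_id)).inv).aestronglyMeasurable

lemma hasFDerivAt_regPotential (hC : 0 < C) (hρ : Continuous ρ)
    (hbound : ∀ x : E3, |ρ x| ≤ C * Real.exp (-‖x‖ / C)) {ε : ℝ} (hε : 0 < ε) (x : E3) :
    HasFDerivAt (fun x => ∫ y, ρ y * (regNorm ε (x - y))⁻¹)
      (∫ z, ρ (x - z) • regKernelDeriv ε z) x := by
  have hint := integrable_density hC hρ hbound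
  rw [← integral_regKernelDeriv_swap]
  refine hasFDerivAt_integral_of_dominated_of_fderiv_le (s := Set.univ)
    (F' := fun x y => ρ y • regKernelDeriv ε (x - y))
    (bound := fun y => ‖ρ y‖ * (ε ^ 2)⁻¹) univ_mem
    (Eventually.of_forall fun x => aestronglyMeasurable_regPotential hρ ε x) ?_ ?_ ?_
    (hint.norm.mul_const _) ?_
  · refine (hint.norm.mul_const ε⁻¹).mono' (aestronglyMeasurable_regPotential hρ ε x)
      (Eventually.of_forall fun y => ?_)
    rw [norm_mul, norm_inv, Real.norm_of_nonneg (regNorm_nonneg _ _)]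
    gcongr
    exact le_regNorm _ _
  · exact hρ.aestronglyMeasurable.smul
      ((aestronglyMeasurable_regKernelDeriv ε).comp_measurePreserving
        (Measure.measurePreserving_sub_left volume x))
  · refine Eventually.of_forall fun y x _ => ?_
    rw [norm_smul]
    gcongr
    exact norm_regKernelDeriv_le_of_pos hε _
  · refine Eventually.of_forall fun y x _ => ?_
    have h := (hasFDerivAt_inv_regNorm hε (x - y)).comp x ((hasFDerivAt_id x).sub_const y)
    exact h.const_mul (ρ y)

lemma tendsto_regPotential (hC : 0 < C) (hρ : Continuous ρ)
    (hbound : ∀ x : E3, |ρ x| ≤ C * Real.exp (-‖x‖ / C)) (x : E3) :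
    Tendsto (fun ε => ∫ y, ρ y * (regNorm ε (x - y))⁻¹) (𝓝 0) (𝓝 (∫ y, ρ y / ‖x - y‖)) := by
  have hswap : ∀ ε, ∫ y, ρ y * (regNorm ε (x - y))⁻¹ = ∫ z, ρ (x - z) * (regNorm ε z)⁻¹ := by
    intro ε
    rw [← integral_sub_left_eq_self (fun z => ρ (x - z) * (regNorm ε z)⁻¹) volume x]
    simp
  have h0 : ∫ y, ρ y / ‖x - y‖ = ∫ z, ρ (x - z) * (regNorm 0 z)⁻¹ := by
    rw [← hswap]
    simp [regNorm_zero, div_eq_mul_inv]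
  simp_rw [h0, hswap]
  refine tendsto_integral_filter_of_dominated_convergence
    (fun z => C * Real.exp (‖x‖ / C) *
      (Real.exp (-‖z‖ / C) + Real.exp (-‖z‖ / C) * (‖z‖ ^ 2)⁻¹)) ?_ ?_
    (((integrable_exp_neg_norm hC).add (integrable_exp_neg_norm_mul hC)).const_mul _) ?_
  · refine Eventually.of_forall fun ε => Measurable.aestronglyMeasurable ?_
    exact (hρ.measurable.comp (measurable_const.sub measurable_id)).mul (measurable_regNorm ε).inv
  · filter_upwards with ε
    filter_upwards [Measure.ae_ne volume (0 : E3)] with z hz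
    have hz' := norm_pos_iff.2 hz
    have h1 : (regNorm ε z)⁻¹ ≤ 1 + (‖z‖ ^ 2)⁻¹ := by
      refine (inv_anti₀ hz' (norm_le_regNorm ε z)).trans ?_
      rw [← inv_pow]
      nlinarith [sq_nonneg (‖z‖⁻¹ - 1)]
    rw [norm_mul, norm_inv, Real.norm_of_nonneg (regNorm_nonneg _ _)]
    calc ‖ρ (x - z)‖ * (regNorm ε z)⁻¹
        ≤ (C * Real.exp (‖x‖ / C) * Real.exp (-‖z‖ / C)) * (1 + (‖z‖ ^ 2)⁻¹) := by
          have := regNorm_nonneg ε z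
          gcongr
          exact abs_translate_le hC hbound le_rfl z
      _ = _ := by ring
  · filter_upwards [Measure.ae_ne volume (0 : E3)] with z hz
    have h0 : regNorm 0 z ≠ 0 := by simpa [regNorm_zero] using hz
    exact (((continuous_regNorm z).tendsto 0).inv₀ h0).const_mul _

lemma tendstoUniformlyOn_regGradient (hC : 0 < C) (hρ : Continuous ρ)
    (hbound : ∀ x : E3, |ρ x| ≤ C * Real.exp (-‖x‖ / C)) (R : ℝ) :
    TendstoUniformlyOn (fun ε x => ∫ z, ρ (x - z) • regKernelDeriv ε z)
      (fun x => ∫ z, ρ (x - z) • regKernelDeriv 0 z) (𝓝 0) (Metric.ball 0 R) := by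
  -- The error is at most `C exp (R/C)` times a weighted `L¹` distance that does not involve `x`.
  have hmeas : ∀ ε, AEStronglyMeasurable (fun z : E3 =>
      Real.exp (-‖z‖ / C) * ‖regKernelDeriv 0 z - regKernelDeriv ε z‖) := fun ε =>
    (by fun_prop : Continuous fun z : E3 => Real.exp (-‖z‖ / C)).aestronglyMeasurable.mul
      ((aestronglyMeasurable_regKernelDeriv 0).sub (aestronglyMeasurable_regKernelDeriv ε)).norm
  have hle : ∀ ε, ∀ z : E3, ‖Real.exp (-‖z‖ / C) * ‖regKernelDeriv 0 z - regKernelDeriv ε z‖‖ ≤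
      2 * (Real.exp (-‖z‖ / C) * (‖z‖ ^ 2)⁻¹) := by
    intro ε z
    rw [Real.norm_of_nonneg (by positivity)]
    have h : ‖regKernelDeriv 0 z - regKernelDeriv ε z‖ ≤ 2 * (‖z‖ ^ 2)⁻¹ := by
      refine (norm_sub_le _ _).trans ?_
      linarith [norm_regKernelDeriv_le 0 z, norm_regKernelDeriv_le ε z]
    calc _ ≤ Real.exp (-‖z‖ / C) * (2 * (‖z‖ ^ 2)⁻¹) := by gcongr
      _ = _ := by ring
  have hbd := (integrable_exp_neg_norm_mul hC).const_mul 2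
  have hlim : Tendsto (fun ε => C * Real.exp (R / C) * ∫ z : E3,
      Real.exp (-‖z‖ / C) * ‖regKernelDeriv 0 z - regKernelDeriv ε z‖) (𝓝 0) (𝓝 0) := by
    have h := tendsto_integral_filter_of_dominated_convergence (l := 𝓝 (0 : ℝ)) (f := fun _ => 0) _
      (Eventually.of_forall hmeas)
      (Eventually.of_forall fun ε => Eventually.of_forall (hle ε)) hbd
      (Eventually.of_forall fun z => by
        simpa using (((tendsto_regKernelDeriv z).const_sub (regKernelDeriv 0 z)).norm).const_mul
          (Real.exp (-‖z‖ / C)))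
    simpa using h.const_mul (C * Real.exp (R / C))
  rw [Metric.tendstoUniformlyOn_iff]
  intro δ hδ
  filter_upwards [hlim.eventually_lt_const hδ] with ε hε x hx
  refine lt_of_le_of_lt ?_ hε
  rw [dist_eq_norm, ← integral_sub (integrable_smul_regKernelDeriv hC hρ hbound 0 x)
    (integrable_smul_regKernelDeriv hC hρ hbound ε x), ← integral_const_mul]
  refine norm_integral_le_of_norm_le
    ((hbd.mono' (hmeas ε) (Eventually.of_forall (hle ε))).const_mul _)
    (Eventually.of_forall fun z => ?_)
  have hfactor : ρ (x - z) • regKernelDeriv 0 z - ρ (x - z) • regKernelDeriv ε z =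
      ρ (x - z) • (regKernelDeriv 0 z - regKernelDeriv ε z) :=
    (smul_sub (ρ (x - z)) (regKernelDeriv 0 z) (regKernelDeriv ε z)).symm
  rw [hfactor, norm_smul, ← mul_assoc]
  gcongr
  exact abs_translate_le hC hbound (mem_ball_zero_iff.1 hx).le z

lemma hasFDerivAt_potential (hC : 0 < C) (hρ : Continuous ρ)
    (hbound : ∀ x : E3, |ρ x| ≤ C * Real.exp (-‖x‖ / C)) (x : E3) :
    HasFDerivAt (fun x => ∫ y, ρ y / ‖x - y‖) (∫ z, ρ (x - z) • regKernelDeriv 0 z) x := by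
  have hseq : Tendsto (fun n : ℕ => (1 : ℝ) / (n + 1)) atTop (𝓝 0) :=
    tendsto_one_div_add_atTop_nhds_zero_nat
  have hu : TendstoUniformlyOn (fun (n : ℕ) x => ∫ z, ρ (x - z) • regKernelDeriv (1 / (n + 1)) z)
      (fun x => ∫ z, ρ (x - z) • regKernelDeriv 0 z) atTop (Metric.ball 0 (‖x‖ + 1)) :=
    fun u hu => hseq.eventually (tendstoUniformlyOn_regGradient hC hρ hbound (‖x‖ + 1) u hu)
  exact hasFDerivAt_of_tendstoUniformlyOn
    (g' := fun x => ∫ z, ρ (x - z) • regKernelDeriv 0 z) Metric.isOpen_ball hu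
    (fun n x _ => hasFDerivAt_regPotential hC hρ hbound (by positivity) x)
    (fun x _ => (tendsto_regPotential hC hρ hbound x).comp hseq) (by simp)

lemma continuous_gradient (hC : 0 < C) (hρ : Continuous ρ)
    (hbound : ∀ x : E3, |ρ x| ≤ C * Real.exp (-‖x‖ / C)) :
    Continuous fun x => ∫ z, ρ (x - z) • regKernelDeriv 0 z := by
  refine continuous_iff_continuousAt.2 fun x₀ => ?_
  refine continuousAt_of_dominated
    (Eventually.of_forall fun x => aestronglyMeasurable_smul_regKernelDeriv hρ 0 x) ?_
    ((integrable_exp_neg_norm_mul hC).const_mul (C * Real.exp ((‖x₀‖ + 1) / C)))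
    (Eventually.of_forall fun z => by fun_prop)
  filter_upwards [continuous_norm.continuousAt.eventually_lt_const (lt_add_one ‖x₀‖)] with x hx
  exact Eventually.of_forall fun z => norm_smul_regKernelDeriv_le hC hbound hx.le 0 z

end Density

end NewtonianPotential

/-- The Newtonian potential of a continuous exponentially localized density is `C¹`
and its gradient is obtained by differentiating under the integral sign. -/
theorem newtonian_potential_gradient
    (C : ℝ) (hC : 0 < C) (ρ : EuclideanSpace ℝ (Fin 3) → ℝ)
    (hρ : Continuous ρ)
    (hbound : ∀ x : EuclideanSpace ℝ (Fin 3), |ρ x| ≤ C * Real.exp (-‖x‖ / C)) :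
    ContDiff ℝ 1 (fun x : EuclideanSpace ℝ (Fin 3) => ∫ y, ρ y / ‖x - y‖) ∧
    ∀ x : EuclideanSpace ℝ (Fin 3),
      gradient (fun x : EuclideanSpace ℝ (Fin 3) => ∫ y, ρ y / ‖x - y‖) x =
        -∫ y, (ρ y / ‖x - y‖ ^ 3) • (x - y) := by
  refine ⟨contDiff_one_iff_hasFDerivAt.2 ⟨_, NewtonianPotential.continuous_gradient hC hρ hbound,
    NewtonianPotential.hasFDerivAt_potential hC hρ hbound⟩, fun x => ?_⟩
  refine HasGradientAt.gradient ?_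
  rw [hasGradientAt_iff_hasFDerivAt]
  refine (NewtonianPotential.hasFDerivAt_potential hC hρ hbound x).congr_fderiv ?_
  rw [← NewtonianPotential.integral_regKernelDeriv_swap, ← integral_neg]
  -- The isometry `toDual` commutes with the Bochner integral without integrability assumptions.
  refine Eq.trans ?_ ((InnerProductSpace.toDual ℝ
    (EuclideanSpace ℝ (Fin 3))).toContinuousLinearEquiv.integral_comp_comm _)
  refine integral_congr_ae (Eventually.of_forall fun y => ?_)
  ext v
  simp [NewtonianPotential.regKernelDeriv, NewtonianPotential.regNorm_zero]
  ring
end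

section
/- Let C > 0 and let ρ : ℝ³ → ℝ be continuously differentiable with |ρ(x)| ≤ C·exp(−‖x‖/C) and ‖∇ρ(x)‖ ≤ C·exp(−‖x‖/C) for all x ∈ ℝ³. Then the Newtonian potential V(x) = ∫_{ℝ³} ρ(y)/‖x − y‖ dy is twice continuously differentiable on ℝ³ and satisfies the Poisson equation −ΔV(x) = 4π·ρ(x) for all x ∈ ℝ³, where Δ is the Euclidean Laplacian. -/
/-!
After the substitution `y = x - z` the potential is the convolution `V x = ∫ ρ (x - z) / ‖z‖ dz`.
Convolving `ρ` with a kernel that is integrable against `exp (-‖z‖ / C)` gives a `C¹` function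
whose derivative falls on `ρ` (`hasFDerivAt_conv`, `contDiff_one_conv`).

As `ρ` is only `C¹`, a second derivative cannot fall on `ρ` as well. Integration by parts
(`integral_fderiv_mul_inv_norm`) instead moves the first one to the kernel:
`∇V x = ∫ ρ (x - z) ∇(1 / ‖z‖) dz`. In dimension three `∇(1 / ‖z‖) = -z / ‖z‖ ^ 3` is still locally
integrable, so the convolution lemma applies again, `V` is `C²`, and
`ΔV x = -∫ ∇ρ (x - z) ⬝ z / ‖z‖ ^ 3 dz`. In polar coordinates `z = r ω` the integrand, multiplied by
the Jacobian `r ^ 2`, is the radial derivative of `r ↦ ρ (x - r ω)`. Every ray contributes `-ρ x`,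
and the unit sphere has area `4π` (`integral_radial`).
-/

open MeasureTheory

/-- The Euclidean Laplacian of a function on `ℝ³`. -/
noncomputable def laplacian3 (f : EuclideanSpace ℝ (Fin 3) → ℝ)
    (x : EuclideanSpace ℝ (Fin 3)) : ℝ :=
  ∑ i : Fin 3,
    iteratedFDeriv ℝ 2 f x ![EuclideanSpace.single i 1, EuclideanSpace.single i 1]

open Filter Topology Set

local notation "E3" => EuclideanSpace ℝ (Fin 3)

/-! ### Convolution with a locally integrable kernel -/

lemma exp_neg_norm_sub_le {C : ℝ} (hC : 0 < C) {x x₀ : E3} (hx : x ∈ Metric.ball x₀ 1)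
    (z : E3) :
    Real.exp (-‖x - z‖ / C) ≤ Real.exp ((‖x₀‖ + 1) / C) * Real.exp (-‖z‖ / C) := by
  rw [← Real.exp_add, ← add_div]
  gcongr
  have h1 : ‖x - x₀‖ < 1 := by simpa [dist_eq_norm] using hx
  have h2 : ‖z‖ ≤ ‖x - z‖ + ‖x‖ := by
    have := norm_sub_le x (x - z)
    rw [sub_sub_cancel] at this
    linarith
  have h3 : ‖x‖ ≤ ‖x - x₀‖ + ‖x₀‖ := by simpa using norm_add_le (x - x₀) x₀
  linarith

section Convolution

variable {F G H : Type*} [NormedAddCommGroup F] [NormedSpace ℝ F] [NormedAddCommGroup G]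
  [NormedSpace ℝ G] [NormedAddCommGroup H] [NormedSpace ℝ H]
  {C : ℝ} {k : E3 → F}

/-- A bound uniform in `x` near `x₀`, for dominated convergence. -/
lemma norm_bilin_le (hC : 0 < C) (L : G →L[ℝ] F →L[ℝ] H) {f : E3 → G}
    (hf : ∀ x, ‖f x‖ ≤ C * Real.exp (-‖x‖ / C)) {x x₀ : E3} (hx : x ∈ Metric.ball x₀ 1)
    (z : E3) :
    ‖L (f (x - z)) (k z)‖ ≤
      (‖L‖ * C * Real.exp ((‖x₀‖ + 1) / C)) * (Real.exp (-‖z‖ / C) * ‖k z‖) :=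
  calc
    ‖L (f (x - z)) (k z)‖ ≤ ‖L‖ * ‖f (x - z)‖ * ‖k z‖ := L.le_opNorm₂ _ _
    _ ≤ ‖L‖ * (C * (Real.exp ((‖x₀‖ + 1) / C) * Real.exp (-‖z‖ / C))) * ‖k z‖ := by
      gcongr
      exact (hf _).trans (by gcongr; exact exp_neg_norm_sub_le hC hx z)
    _ = _ := by ring

lemma aesm_bilin (hk : AEStronglyMeasurable k) (L : G →L[ℝ] F →L[ℝ] H)
    {f : E3 → G} (hfc : Continuous f) (x : E3) :
    AEStronglyMeasurable (fun z => L (f (x - z)) (k z)) :=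
  L.aestronglyMeasurable_comp₂ (hfc.comp (by fun_prop)).aestronglyMeasurable hk

lemma integrable_bilin (hC : 0 < C) (hk : AEStronglyMeasurable k)
    (hki : Integrable fun z => Real.exp (-‖z‖ / C) * ‖k z‖) (L : G →L[ℝ] F →L[ℝ] H)
    {f : E3 → G} (hfc : Continuous f) (hf : ∀ x, ‖f x‖ ≤ C * Real.exp (-‖x‖ / C)) (x : E3) :
    Integrable (fun z => L (f (x - z)) (k z)) :=
  (hki.const_mul _).mono' (aesm_bilin hk L hfc x)
    (.of_forall fun z => norm_bilin_le hC L hf (Metric.mem_ball_self one_pos) z)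

lemma continuous_bilin (hC : 0 < C) (hk : AEStronglyMeasurable k)
    (hki : Integrable fun z => Real.exp (-‖z‖ / C) * ‖k z‖) (L : G →L[ℝ] F →L[ℝ] H)
    {f : E3 → G} (hfc : Continuous f) (hf : ∀ x, ‖f x‖ ≤ C * Real.exp (-‖x‖ / C)) :
    Continuous (fun x => ∫ z, L (f (x - z)) (k z)) := by
  rw [continuous_iff_continuousAt]
  intro x₀
  refine continuousAt_of_dominated (.of_forall fun x => aesm_bilin hk L hfc x) ?_
    (hki.const_mul (‖L‖ * C * Real.exp ((‖x₀‖ + 1) / C))) ?_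
  · filter_upwards [Metric.ball_mem_nhds x₀ one_pos] with x hx
    exact .of_forall fun z => norm_bilin_le hC L hf hx z
  · refine .of_forall fun z => Continuous.continuousAt ?_
    fun_prop

lemma norm_fderiv_le_of_gradient {ρ : E3 → ℝ}
    (hgradbound : ∀ x, ‖gradient ρ x‖ ≤ C * Real.exp (-‖x‖ / C)) (x : E3) :
    ‖fderiv ℝ ρ x‖ ≤ C * Real.exp (-‖x‖ / C) := by
  have := hgradbound x
  rwa [gradient, LinearIsometryEquiv.norm_map] at this

/-- Differentiation under the integral sign for the convolution of `ρ` with a kernel `k` that is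
integrable against `exp (-‖z‖ / C)`: the derivative falls on `ρ`. -/
lemma hasFDerivAt_conv (hC : 0 < C) (hk : AEStronglyMeasurable k)
    (hki : Integrable fun z => Real.exp (-‖z‖ / C) * ‖k z‖)
    {ρ : E3 → ℝ} (hρ : ContDiff ℝ 1 ρ) (hb : ∀ x, ‖ρ x‖ ≤ C * Real.exp (-‖x‖ / C))
    (hb' : ∀ x, ‖fderiv ℝ ρ x‖ ≤ C * Real.exp (-‖x‖ / C)) (x₀ : E3) :
    HasFDerivAt (fun x => ∫ z, ρ (x - z) • k z)
      (∫ z, (fderiv ℝ ρ (x₀ - z)).smulRight (k z)) x₀ := by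
  have hcont := hρ.continuous_fderiv one_ne_zero
  refine hasFDerivAt_integral_of_dominated_of_fderiv_le (Metric.ball_mem_nhds x₀ one_pos)
    (F' := fun x z => (fderiv ℝ ρ (x - z)).smulRight (k z))
    (.of_forall fun x => aesm_bilin hk (.lsmul ℝ ℝ) hρ.continuous x)
    (integrable_bilin hC hk hki (.lsmul ℝ ℝ) hρ.continuous hb x₀)
    (aesm_bilin hk (.smulRightL ℝ E3 F) hcont x₀)
    (.of_forall fun z x hx => norm_bilin_le hC (.smulRightL ℝ E3 F) hb' hx z)
    (hki.const_mul _) (.of_forall fun z x _ => ?_)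
  have h1 : HasFDerivAt ρ (fderiv ℝ ρ (x - z)) (x - z) :=
    (hρ.differentiable one_ne_zero _).hasFDerivAt
  have h2 : HasFDerivAt (fun x => ρ (x - z)) (fderiv ℝ ρ (x - z)) x := by
    have := h1.comp x ((hasFDerivAt_id x).sub_const z)
    rwa [ContinuousLinearMap.comp_id] at this
  exact h2.smul_const (k z)

lemma contDiff_one_conv (hC : 0 < C) (hk : AEStronglyMeasurable k)
    (hki : Integrable fun z => Real.exp (-‖z‖ / C) * ‖k z‖)
    {ρ : E3 → ℝ} (hρ : ContDiff ℝ 1 ρ) (hb : ∀ x, ‖ρ x‖ ≤ C * Real.exp (-‖x‖ / C))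
    (hb' : ∀ x, ‖fderiv ℝ ρ x‖ ≤ C * Real.exp (-‖x‖ / C)) :
    ContDiff ℝ 1 (fun x => ∫ z, ρ (x - z) • k z) := by
  rw [contDiff_one_iff_fderiv]
  have h := hasFDerivAt_conv hC hk hki hρ hb hb'
  refine ⟨fun x => (h x).differentiableAt, ?_⟩
  rw [funext fun x => (h x).fderiv]
  exact continuous_bilin hC hk hki (.smulRightL ℝ E3 F) (hρ.continuous_fderiv one_ne_zero) hb'

lemma integrable_fderiv_smulRight (hC : 0 < C) (hk : AEStronglyMeasurable k)
    (hki : Integrable fun z => Real.exp (-‖z‖ / C) * ‖k z‖)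
    {ρ : E3 → ℝ} (hρ : ContDiff ℝ 1 ρ)
    (hb' : ∀ x, ‖fderiv ℝ ρ x‖ ≤ C * Real.exp (-‖x‖ / C)) (x : E3) :
    Integrable fun z => (fderiv ℝ ρ (x - z)).smulRight (k z) :=
  integrable_bilin hC hk hki (.smulRightL ℝ E3 F) (hρ.continuous_fderiv one_ne_zero) hb' x

lemma integrable_smul (hC : 0 < C) (hk : AEStronglyMeasurable k)
    (hki : Integrable fun z => Real.exp (-‖z‖ / C) * ‖k z‖)
    {ρ : E3 → ℝ} (hρ : ContDiff ℝ 1 ρ) (hb : ∀ x, ‖ρ x‖ ≤ C * Real.exp (-‖x‖ / C)) (x : E3) :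
    Integrable fun z => ρ (x - z) • k z :=
  integrable_bilin hC hk hki (.lsmul ℝ ℝ) hρ.continuous hb x

end Convolution

/-! ### The kernels `1 / ‖z‖` and `∇(1 / ‖z‖)` -/

/-- The gradient of `1 / ‖z‖`, as a covector: `z ↦ -⟪z, ·⟫ / ‖z‖ ^ 3`, with value `0` at the
origin. -/
noncomputable def newtonKernel (z : E3) : E3 →L[ℝ] ℝ := (-(‖z‖ ^ 3)⁻¹) • innerSL ℝ z

lemma newtonKernel_apply (z v : E3) : newtonKernel z v = -(‖z‖ ^ 3)⁻¹ * inner ℝ z v := by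
  simp [newtonKernel]

lemma measurable_newtonKernel : AEStronglyMeasurable newtonKernel := by
  have h1 : Measurable fun z : E3 => -(‖z‖ ^ 3)⁻¹ := by fun_prop
  exact h1.aestronglyMeasurable.smul (innerSL ℝ (E := E3)).continuous.aestronglyMeasurable

lemma norm_newtonKernel (z : E3) : ‖newtonKernel z‖ = (‖z‖ ^ 2)⁻¹ := by
  rw [newtonKernel, norm_smul, innerSL_apply_norm]
  rcases eq_or_ne z 0 with rfl | h
  · simp
  · have : 0 < ‖z‖ := norm_pos_iff.2 h
    rw [norm_neg, norm_inv, norm_pow, norm_norm]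
    field_simp

/-- In polar coordinates the Jacobian `r ^ 2` absorbs the singularity `r ^ (-n)`. -/
lemma integrable_exp_mul_pow {C : ℝ} (hC : 0 < C) {n : ℕ} (hn : n ≤ 2) :
    Integrable fun z : E3 => Real.exp (-‖z‖ / C) * (‖z‖ ^ n)⁻¹ := by
  rw [integrable_fun_norm_addHaar volume (f := fun r => Real.exp (-r / C) * (r ^ n)⁻¹)]
  have h := integrableOn_rpow_mul_exp_neg_mul_rpow (s := ((2 - n : ℕ) : ℝ)) (p := 1)
    (b := C⁻¹) (by linarith [Nat.cast_nonneg (α := ℝ) (2 - n)]) one_pos (by positivity)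
  refine h.congr_fun (fun r hr => ?_) measurableSet_Ioi
  have hr : 0 < r := hr
  have : r ^ 2 = r ^ (2 - n) * r ^ n := by rw [← pow_add, Nat.sub_add_cancel hn]
  simp only [finrank_euclideanSpace, Fintype.card_fin, smul_eq_mul, Real.rpow_natCast,
    Real.rpow_one, Nat.add_one_sub_one]
  rw [this]
  field_simp

lemma integrable_exp_mul_inv {C : ℝ} (hC : 0 < C) :
    Integrable fun z : E3 => Real.exp (-‖z‖ / C) * ‖(‖z‖⁻¹ : ℝ)‖ := by
  simpa using integrable_exp_mul_pow hC one_le_two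

lemma integrable_exp_mul_newtonKernel {C : ℝ} (hC : 0 < C) :
    Integrable fun z : E3 => Real.exp (-‖z‖ / C) * ‖newtonKernel z‖ := by
  simpa [norm_newtonKernel] using integrable_exp_mul_pow hC le_rfl

/-- Integration by parts against `1 / ‖z‖`. The singularity at the origin is smoothed to
`(‖z‖ ^ 2 + ε) ^ (-1 / 2)`, and `ε` tends to `0` by dominated convergence. -/
lemma integral_fderiv_mul_inv_norm {C : ℝ} (hC : 0 < C) {ρ : E3 → ℝ} (hρ : ContDiff ℝ 1 ρ)
    (hb : ∀ x, ‖ρ x‖ ≤ C * Real.exp (-‖x‖ / C))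
    (hb' : ∀ x, ‖fderiv ℝ ρ x‖ ≤ C * Real.exp (-‖x‖ / C)) (x v : E3) :
    ∫ z, fderiv ℝ ρ (x - z) v * ‖z‖⁻¹ = ∫ z, ρ (x - z) * newtonKernel z v := by
  have hρc := hρ.continuous
  have hρd := hρ.continuous_fderiv one_ne_zero
  have hm : AEStronglyMeasurable (fun z : E3 => ‖z‖⁻¹) :=
    Measurable.aestronglyMeasurable (by fun_prop)
  have hi := integrable_exp_mul_inv hC
  -- `B0`, `B1`, `B2` dominate the integrands below uniformly in the smoothing parameter `ε`.
  have B0 : Integrable fun z => ‖z‖⁻¹ * ‖ρ (x - z)‖ := by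
    refine (integrable_bilin hC hm hi (.lsmul ℝ ℝ) hρc hb x).norm.congr (.of_forall fun z => ?_)
    simp [mul_comm]
  have B1 : Integrable fun z => ‖z‖⁻¹ * (‖fderiv ℝ ρ (x - z)‖ * ‖v‖) := by
    refine ((integrable_bilin hC hm hi (.smulRightL ℝ E3 ℝ) hρd hb' x).norm.mul_const ‖v‖).congr
      (.of_forall fun z => ?_)
    simp [ContinuousLinearMap.norm_smulRight_apply]
    ring
  have B2 : Integrable fun z => (‖z‖ ^ 2)⁻¹ * ‖v‖ * ‖ρ (x - z)‖ := by
    refine ((integrable_bilin hC measurable_newtonKernel (integrable_exp_mul_newtonKernel hC)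
      (.lsmul ℝ ℝ) hρc hb x).norm.mul_const ‖v‖).congr (.of_forall fun z => ?_)
    simp only [ContinuousLinearMap.lsmul_apply, norm_smul, norm_newtonKernel]
    ring
  let s : ℝ → E3 → ℝ := fun ε z => √(‖z‖ ^ 2 + ε)
  have hs0 : ∀ ε > 0, ∀ z, 0 < s ε z := fun ε hε z => Real.sqrt_pos.2 (by positivity)
  have hsc : ∀ ε, Continuous (s ε) := fun ε => by fun_prop
  have hsz : ∀ ε > 0, ∀ z, ‖z‖ ≤ s ε z := fun ε hε z =>
    Real.le_sqrt_of_sq_le (by linarith)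
  have hz0 : ∀ᵐ z : E3, z ≠ 0 := by
    simp [ae_iff]
  have b1 : ∀ ε > 0, ∀ᵐ z : E3, ‖(s ε z)⁻¹‖ ≤ ‖z‖⁻¹ := fun ε hε => by
    filter_upwards [hz0] with z hz
    have : 0 < ‖z‖ := norm_pos_iff.2 hz
    rw [norm_inv, Real.norm_of_nonneg (hs0 ε hε z).le]
    exact inv_anti₀ this (hsz ε hε z)
  have b2 : ∀ ε > 0, ∀ᵐ z : E3, ‖-((s ε z) ^ 3)⁻¹ * inner ℝ z v‖ ≤ (‖z‖ ^ 2)⁻¹ * ‖v‖ :=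
    fun ε hε => by
    filter_upwards [hz0] with z hz
    have hz : 0 < ‖z‖ := norm_pos_iff.2 hz
    rw [norm_mul, norm_neg, norm_inv, norm_pow, Real.norm_of_nonneg (hs0 ε hε z).le]
    calc ((s ε z) ^ 3)⁻¹ * ‖inner ℝ z v‖ ≤ (‖z‖ ^ 3)⁻¹ * (‖z‖ * ‖v‖) := by
          gcongr
          · exact hsz ε hε z
          · exact norm_inner_le_norm z v
      _ = _ := by field_simp
  have hder : ∀ ε > 0, ∀ z, HasFDerivAt (fun z => (s ε z)⁻¹)
      ((-((s ε z) ^ 3)⁻¹) • innerSL ℝ z) z := fun ε hε z => by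
    have h1 : HasFDerivAt (fun z : E3 => ‖z‖ ^ 2 + ε) (2 • innerSL ℝ z) z :=
      (hasStrictFDerivAt_norm_sq z).hasFDerivAt.add_const ε
    have hne : ‖z‖ ^ 2 + ε ≠ 0 := by positivity
    have h2 := (hasDerivAt_inv (hs0 ε hε z).ne').comp_hasFDerivAt z (h1.sqrt hne)
    refine h2.congr_fderiv ?_
    ext w
    have := hs0 ε hε z
    simp only [smul_apply, innerSL_apply_apply, smul_eq_mul, nsmul_eq_mul]
    change -(s ε z ^ 2)⁻¹ * (1 / (2 * s ε z) * _) = _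
    push_cast
    field_simp
  have hg : ∀ z, HasFDerivAt (fun z => ρ (x - z)) (-fderiv ℝ ρ (x - z)) z := fun z => by
    have h1 := (hρ.differentiable one_ne_zero (x - z)).hasFDerivAt.comp z
      ((hasFDerivAt_id z).const_sub x)
    refine h1.congr_fderiv ?_
    ext w
    simp
  have key : ∀ ε > 0, ∫ z, fderiv ℝ ρ (x - z) v * (s ε z)⁻¹ =
      ∫ z, ρ (x - z) * (-((s ε z) ^ 3)⁻¹ * inner ℝ z v) := fun ε hε => by
    have hinv : Continuous fun z => (s ε z)⁻¹ := (hsc ε).inv₀ fun z => (hs0 ε hε z).ne'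
    have hinv3 : Continuous fun z => (s ε z ^ 3)⁻¹ :=
      ((hsc ε).pow 3).inv₀ fun z => (pow_pos (hs0 ε hε z) 3).ne'
    have h := integral_mul_fderiv_eq_neg_fderiv_mul_of_integrable (μ := (volume : Measure E3))
      (f := fun z => (s ε z)⁻¹) (g := fun z => ρ (x - z)) (v := v) ?_ ?_ ?_
      (fun z _ => (hder ε hε z).differentiableAt) (fun z _ => (hg z).differentiableAt)
    · simp only [(hder ε hε _).fderiv, (hg _).fderiv, neg_apply,
        smul_apply, innerSL_apply_apply, smul_eq_mul, mul_neg,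
        integral_neg, neg_inj] at h
      simpa [mul_comm] using h
    · simp only [(hder ε hε _).fderiv, smul_apply, innerSL_apply_apply,
        smul_eq_mul]
      refine B2.mono' (Continuous.aestronglyMeasurable (by fun_prop)) ?_
      filter_upwards [b2 ε hε] with z hz
      rw [norm_mul]
      gcongr
    · simp only [(hg _).fderiv, neg_apply]
      refine B1.mono' (Continuous.aestronglyMeasurable (by fun_prop)) ?_
      filter_upwards [b1 ε hε] with z hz
      rw [norm_mul, norm_neg]
      gcongr
      exact ContinuousLinearMap.le_opNorm _ _
    · refine B0.mono' (Continuous.aestronglyMeasurable (by fun_prop)) ?_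
      filter_upwards [b1 ε hε] with z hz
      rw [norm_mul]
      gcongr
  have hlim : ∀ z : E3, Tendsto (fun ε => s ε z) (𝓝[>] 0) (𝓝 ‖z‖) := fun z => by
    have : ContinuousAt (fun ε => s ε z) 0 := by fun_prop
    have h := this.tendsto.mono_left (nhdsWithin_le_nhds (s := Ioi 0))
    simpa [s] using h
  have hpos : ∀ᶠ ε : ℝ in 𝓝[>] 0, 0 < ε := self_mem_nhdsWithin
  have L1 : Tendsto (fun ε => ∫ z, fderiv ℝ ρ (x - z) v * (s ε z)⁻¹) (𝓝[>] 0)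
      (𝓝 (∫ z, fderiv ℝ ρ (x - z) v * ‖z‖⁻¹)) := by
    refine tendsto_integral_filter_of_dominated_convergence _ ?_ ?_ B1 ?_
    · filter_upwards [hpos] with ε hε
      have hinv : Continuous fun z => (s ε z)⁻¹ := (hsc ε).inv₀ fun z => (hs0 ε hε z).ne'
      exact Continuous.aestronglyMeasurable (by fun_prop)
    · filter_upwards [hpos] with ε hε
      filter_upwards [b1 ε hε] with z hz
      rw [norm_mul, mul_comm]
      gcongr
      exact ContinuousLinearMap.le_opNorm _ _
    · filter_upwards [hz0] with z hz
      exact ((hlim z).inv₀ (norm_ne_zero_iff.2 hz)).const_mul _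
  have L2 : Tendsto (fun ε => ∫ z, ρ (x - z) * (-((s ε z) ^ 3)⁻¹ * inner ℝ z v)) (𝓝[>] 0)
      (𝓝 (∫ z, ρ (x - z) * newtonKernel z v)) := by
    refine tendsto_integral_filter_of_dominated_convergence _ ?_ ?_ B2 ?_
    · filter_upwards [hpos] with ε hε
      have hinv3 : Continuous fun z => (s ε z ^ 3)⁻¹ :=
        ((hsc ε).pow 3).inv₀ fun z => (pow_pos (hs0 ε hε z) 3).ne'
      exact Continuous.aestronglyMeasurable (by fun_prop)
    · filter_upwards [hpos] with ε hε
      filter_upwards [b2 ε hε] with z hz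
      rw [norm_mul, mul_comm]
      gcongr
    · filter_upwards [hz0] with z hz
      simp only [newtonKernel_apply]
      exact (((((hlim z).pow 3).inv₀ (by simpa using hz)).neg).mul_const _).const_mul _
  refine tendsto_nhds_unique L1 (L2.congr' ?_)
  filter_upwards [hpos] with ε hε using (key ε hε).symm

/-! ### Polar coordinates and the flux identity -/

/-- Integration in polar coordinates `z = r ω` on `ℝ³`. -/
lemma integral_polar {f : E3 → ℝ} (hf : Integrable f) :
    ∫ z, f z = ∫ ω : Metric.sphere (0 : E3) 1,
      (∫ r in Ioi (0 : ℝ), r ^ 2 * f (r • (ω : E3))) ∂(volume : Measure E3).toSphere := by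
  have hmp := (volume : Measure E3).measurePreserving_homeomorphUnitSphereProd
  have hemb := (homeomorphUnitSphereProd E3).measurableEmbedding
  let g : Metric.sphere (0 : E3) 1 × Ioi (0 : ℝ) → ℝ := fun p => f ((p.2 : ℝ) • (p.1 : E3))
  have hg : ∀ z : ({0}ᶜ : Set E3), g (homeomorphUnitSphereProd E3 z) = f z := by
    intro z
    have : ‖(z : E3)‖ ≠ 0 := norm_ne_zero_iff.2 z.2
    simp [g, smul_smul, this]
  have hint : Integrable g ((volume : Measure E3).toSphere.prod
      (.volumeIoiPow (Module.finrank ℝ E3 - 1))) := by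
    rw [← hmp.integrable_comp_emb hemb]
    have : g ∘ homeomorphUnitSphereProd E3 = f ∘ Subtype.val := funext hg
    rw [this, ← integrableOn_iff_comap_subtypeVal (by measurability)]
    exact hf.integrableOn
  calc
    ∫ z, f z = ∫ z : ({0}ᶜ : Set E3), f z ∂(volume.comap Subtype.val) := by
      rw [integral_subtype_comap (measurableSet_singleton _).compl f, restrict_compl_singleton]
    _ = ∫ p, g p ∂((volume : Measure E3).toSphere.prod
          (.volumeIoiPow (Module.finrank ℝ E3 - 1))) := by
      rw [← hmp.integral_comp hemb]
      simp only [hg]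
    _ = ∫ ω : Metric.sphere (0 : E3) 1, (∫ r : Ioi (0 : ℝ), g (ω, r)
          ∂(.volumeIoiPow (Module.finrank ℝ E3 - 1))) ∂(volume : Measure E3).toSphere :=
      integral_prod _ hint
    _ = _ := by
      congr 1
      ext ω
      simp only [Measure.volumeIoiPow, ENNReal.ofReal, finrank_euclideanSpace, Fintype.card_fin,
        Nat.add_one_sub_one, g]
      rw [integral_withDensity_eq_integral_smul,
        integral_subtype_comap measurableSet_Ioi
          fun a : ℝ => Real.toNNReal (a ^ 2) • f (a • (ω : E3))]
      · refine setIntegral_congr_fun measurableSet_Ioi fun r hr => ?_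
        simp only [NNReal.smul_def, Real.coe_toNNReal _ (sq_nonneg r), smul_eq_mul]
      · exact (measurable_subtype_coe.pow_const _).real_toNNReal

lemma toSphere_real_univ : (volume : Measure E3).toSphere.real univ = 4 * Real.pi := by
  rw [Measure.toSphere_real_apply_univ, measureReal_def, EuclideanSpace.volume_ball_fin_three]
  have : 0 ≤ Real.pi * 4 / 3 := by positivity
  simp only [finrank_euclideanSpace, Fintype.card_fin, ENNReal.ofReal_one, one_pow, one_mul,
    ENNReal.toReal_ofReal this]
  push_cast
  ring

/-- The flux identity: in polar coordinates the integrand is the radial derivative of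
`r ↦ ρ (x - r ω)`, so each ray contributes `-ρ x` and the sphere has area `4π`. -/
lemma integral_radial {C : ℝ} (hC : 0 < C) {ρ : E3 → ℝ} (hρ : ContDiff ℝ 1 ρ)
    (hb : ∀ x, ‖ρ x‖ ≤ C * Real.exp (-‖x‖ / C))
    (hb' : ∀ x, ‖fderiv ℝ ρ x‖ ≤ C * Real.exp (-‖x‖ / C)) (x : E3)
    (hint : Integrable fun z => -(‖z‖ ^ 3)⁻¹ * fderiv ℝ ρ (x - z) z) :
    ∫ z, -(‖z‖ ^ 3)⁻¹ * fderiv ℝ ρ (x - z) z = -(4 * Real.pi * ρ x) := by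
  rw [integral_polar hint]
  have hray : ∀ ω : Metric.sphere (0 : E3) 1,
      ∫ r in Ioi (0 : ℝ), r ^ 2 * (-(‖r • (ω : E3)‖ ^ 3)⁻¹ *
        fderiv ℝ ρ (x - r • (ω : E3)) (r • (ω : E3))) = -ρ x := by
    intro ω
    have hω : ‖(ω : E3)‖ = 1 := by simp
    have h1 : ∫ r in Ioi (0 : ℝ), r ^ 2 * (-(‖r • (ω : E3)‖ ^ 3)⁻¹ *
        fderiv ℝ ρ (x - r • (ω : E3)) (r • (ω : E3))) =
        ∫ r in Ioi (0 : ℝ), -fderiv ℝ ρ (x - r • (ω : E3)) ω := by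
      refine setIntegral_congr_fun measurableSet_Ioi fun r hr => ?_
      have hr : 0 < r := hr
      simp only [norm_smul, hω, map_smul, smul_eq_mul, Real.norm_of_nonneg hr.le]
      field_simp
    have hder : ∀ r ∈ Ici (0 : ℝ), HasDerivAt (fun r : ℝ => ρ (x - r • (ω : E3)))
        (-fderiv ℝ ρ (x - r • (ω : E3)) ω) r := by
      intro r _
      have h2 : HasDerivAt (fun r : ℝ => x - r • (ω : E3)) (-(ω : E3)) r := by
        simpa using ((hasDerivAt_id r).smul_const (ω : E3)).const_sub x
      have h3 := (hρ.differentiable one_ne_zero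
        (x - r • (ω : E3))).hasFDerivAt.comp_hasDerivAt r h2
      rwa [map_neg] at h3
    have hle : ∀ r : ℝ, 0 ≤ r → C * Real.exp (-‖x - r • (ω : E3)‖ / C) ≤
        C * Real.exp ((‖x‖ + 1) / C) * Real.exp (-C⁻¹ * r) := by
      intro r hr
      have := exp_neg_norm_sub_le hC (Metric.mem_ball_self (x := x) one_pos) (r • (ω : E3))
      rw [norm_smul, hω, Real.norm_of_nonneg hr, mul_one] at this
      rw [mul_assoc]
      refine mul_le_mul_of_nonneg_left (this.trans_eq ?_) hC.le
      congr 2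
      ring
    have hfint : IntegrableOn (fun r : ℝ => -fderiv ℝ ρ (x - r • (ω : E3)) ω) (Ioi 0) := by
      have hρd := hρ.continuous_fderiv one_ne_zero
      refine ((integrableOn_exp_mul_Ioi (a := -C⁻¹) (by simpa using hC) 0).const_mul
        (C * Real.exp ((‖x‖ + 1) / C))).mono'
        (Continuous.aestronglyMeasurable (by fun_prop)) ?_
      filter_upwards [ae_restrict_mem measurableSet_Ioi] with r hr
      rw [norm_neg]
      refine (ContinuousLinearMap.le_opNorm _ _).trans ?_
      rw [hω, mul_one]
      exact (hb' _).trans (hle r (le_of_lt hr))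
    have htend : Tendsto (fun r : ℝ => ρ (x - r • (ω : E3))) atTop (𝓝 0) := by
      have h0 : Tendsto (fun r : ℝ => C * Real.exp ((‖x‖ + 1) / C) * Real.exp (-C⁻¹ * r)) atTop
          (𝓝 0) := by
        have : Tendsto (fun r : ℝ => -C⁻¹ * r) atTop atBot :=
          tendsto_id.const_mul_atTop_of_neg (by simpa using hC)
        simpa using (Real.tendsto_exp_atBot.comp this).const_mul
          (C * Real.exp ((‖x‖ + 1) / C))
      refine squeeze_zero_norm' ?_ h0
      filter_upwards [eventually_ge_atTop 0] with r hr
      exact (hb _).trans (hle r hr)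
    rw [h1, integral_Ioi_of_hasDerivAt_of_tendsto' hder hfint htend]
    simp
  simp only [hray, integral_const, toSphere_real_univ, smul_eq_mul]
  ring

/-! ### The Poisson equation -/

/-- The Newtonian potential of a `C¹` exponentially localized density (with
exponentially localized gradient) is `C²` and solves the Poisson equation
`-ΔV = 4π ρ`. -/
theorem newtonian_potential_poisson
    (C : ℝ) (hC : 0 < C) (ρ : EuclideanSpace ℝ (Fin 3) → ℝ)
    (hρ : ContDiff ℝ 1 ρ)
    (hbound : ∀ x : EuclideanSpace ℝ (Fin 3), |ρ x| ≤ C * Real.exp (-‖x‖ / C))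
    (hgradbound : ∀ x : EuclideanSpace ℝ (Fin 3),
      ‖gradient ρ x‖ ≤ C * Real.exp (-‖x‖ / C)) :
    ContDiff ℝ 2 (fun x : EuclideanSpace ℝ (Fin 3) => ∫ y, ρ y / ‖x - y‖) ∧
    ∀ x : EuclideanSpace ℝ (Fin 3),
      -laplacian3 (fun x : EuclideanSpace ℝ (Fin 3) => ∫ y, ρ y / ‖x - y‖) x =
        4 * Real.pi * ρ x := by
  have hb : ∀ x, ‖ρ x‖ ≤ C * Real.exp (-‖x‖ / C) := hbound
  have hb' := norm_fderiv_le_of_gradient hgradbound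
  have hm : AEStronglyMeasurable (fun z : E3 => ‖z‖⁻¹) :=
    Measurable.aestronglyMeasurable (by fun_prop)
  have hi := integrable_exp_mul_inv hC
  have hk := measurable_newtonKernel
  have hki := integrable_exp_mul_newtonKernel hC
  have hV : (fun x : E3 => ∫ y, ρ y / ‖x - y‖) = fun x => ∫ z, ρ (x - z) • ‖z‖⁻¹ := by
    funext x
    rw [← integral_sub_left_eq_self _ volume x]
    simp [div_eq_mul_inv]
  rw [hV]
  have h1 := fun x => hasFDerivAt_conv hC hm hi hρ hb hb' x
  -- The first derivative is again a convolution of `ρ`, now with the gradient kernel.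
  have hV' : fderiv ℝ (fun x => ∫ z, ρ (x - z) • ‖z‖⁻¹) =
      fun x => ∫ z, ρ (x - z) • newtonKernel z := by
    funext x
    rw [(h1 x).fderiv]
    ext v
    rw [ContinuousLinearMap.integral_apply (integrable_fderiv_smulRight hC hm hi hρ hb' x),
      ContinuousLinearMap.integral_apply (integrable_smul hC hk hki hρ hb x)]
    simpa using integral_fderiv_mul_inv_norm hC hρ hb hb' x v
  refine ⟨?_, fun x => ?_⟩
  · rw [show (2 : WithTop ℕ∞) = 1 + 1 by norm_num, contDiff_succ_iff_fderiv]
    refine ⟨fun x => (h1 x).differentiableAt, by simp, ?_⟩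
    rw [hV']
    exact contDiff_one_conv hC hk hki hρ hb hb'
  · have hI := integrable_fderiv_smulRight hC hk hki hρ hb' x
    have hsum : ∀ z : E3, ∑ i : Fin 3, (fderiv ℝ ρ (x - z)).smulRight (newtonKernel z)
        (EuclideanSpace.single i 1) (EuclideanSpace.single i 1) =
          -(‖z‖ ^ 3)⁻¹ * fderiv ℝ ρ (x - z) z := by
      intro z
      have hz : z = ∑ i : Fin 3, z i • EuclideanSpace.single i (1 : ℝ) := by
        ext j
        simp [Finset.sum_apply, Pi.single_apply]
      conv_rhs => rw [hz, map_sum, ← hz, Finset.mul_sum]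
      refine Finset.sum_congr rfl fun i _ => ?_
      simp [newtonKernel_apply, EuclideanSpace.inner_single_right]
      ring
    have hI1 : ∀ i : Fin 3, Integrable fun z => (fderiv ℝ ρ (x - z)).smulRight (newtonKernel z)
        (EuclideanSpace.single i 1) (EuclideanSpace.single i 1) := fun i =>
      (hI.apply_continuousLinearMap (EuclideanSpace.single i 1)).apply_continuousLinearMap
        (EuclideanSpace.single i 1)
    have hint : Integrable fun z => -(‖z‖ ^ 3)⁻¹ * fderiv ℝ ρ (x - z) z := by
      simp only [← hsum]
      exact integrable_finsetSum _ fun i _ => hI1 i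
    have hlap : laplacian3 (fun x => ∫ z, ρ (x - z) • ‖z‖⁻¹) x =
        ∫ z, -(‖z‖ ^ 3)⁻¹ * fderiv ℝ ρ (x - z) z := by
      simp only [laplacian3, iteratedFDeriv_two_apply, hV',
        (hasFDerivAt_conv hC hk hki hρ hb hb' x).fderiv, ← hsum, Matrix.cons_val_zero,
        Matrix.cons_val_one]
      rw [integral_finsetSum _ fun i _ => hI1 i]
      refine Finset.sum_congr rfl fun i _ => ?_
      rw [ContinuousLinearMap.integral_apply hI]
      exact ContinuousLinearMap.integral_apply
        (hI.apply_continuousLinearMap (EuclideanSpace.single i 1)) _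
    rw [hlap, integral_radial hC hρ hb hb' x hint, neg_neg]
end
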